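/- arXiv:1912.04335 — 11 statements merged into one kernel-verified Lean document; each statement's English description precedes it below -/
import Mathlib

section
/- Suppose (x̂, π̂) is dual-feasible and φ ≥ ‖π̂‖∞. Then every pair (x, z) feasible for the penalized problem (P_φ) satisfies f(x) + φ·1ᵀz ≥ −(1/2)x̂ᵀHx̂ + bᵀπ̂; in particular, the penalized objective f_φ is bounded below on the feasible set of (P_φ). (Second claim of Lemma 2.0.) -/
open Matrix Filter

/-- The quadratic objective f(x) = (1/2) xᵀHx + cᵀx. -/
noncomputable def qObj {n : ℕ} (H : Matrix (Fin n) (Fin n) ℝ) (c : Fin n → ℝ)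
    (x : Fin n → ℝ) : ℝ :=
  (1 / 2) * (x ⬝ᵥ H.mulVec x) + c ⬝ᵥ x

/-! The Lagrangian `f(x) - π̂ᵀ(Ax - b)` is convex in `x`, and dual feasibility makes `x̂` a
stationary point of it, so its minimum is the dual objective `ψ(x̂, π̂)`. A penalized-feasible
`(x, z)` violates the constraints by at most `z`, so `π̂ᵀ(Ax - b) ≥ -π̂ᵀz ≥ -φ ∑ zᵢ`: the penalty
pays for the violation. -/

section

variable {R ι : Type*} [CommRing R] [Fintype ι]

lemma sub_dotProduct_mulVec_sub_of_isSymm {H : Matrix ι ι R} (hH : H.IsSymm) (x y : ι → R) :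
    (x - y) ⬝ᵥ H *ᵥ (x - y) = x ⬝ᵥ H *ᵥ x - 2 * (x ⬝ᵥ H *ᵥ y) + y ⬝ᵥ H *ᵥ y := by
  have hcomm : y ⬝ᵥ H *ᵥ x = x ⬝ᵥ H *ᵥ y := by
    simpa only [hH.eq] using dotProduct_transpose_mulVec H y x
  rw [mulVec_sub, sub_dotProduct, dotProduct_sub, dotProduct_sub, hcomm]
  ring

lemma two_mul_dotProduct_mulVec_le_add_of_posSemidef [PartialOrder R] [IsOrderedAddMonoid R]
    [StarRing R] [TrivialStar R] {H : Matrix ι ι R} (hH : H.PosSemidef) (x y : ι → R) :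
    2 * (x ⬝ᵥ H *ᵥ y) ≤ x ⬝ᵥ H *ᵥ x + y ⬝ᵥ H *ᵥ y := by
  have hsymm : H.IsSymm := isHermitian_iff_isSymm.mp hH.isHermitian
  have hnonneg : 0 ≤ (x - y) ⬝ᵥ H *ᵥ (x - y) := by
    simpa only [star_trivial] using hH.dotProduct_mulVec_nonneg (x - y)
  rw [sub_dotProduct_mulVec_sub_of_isSymm hsymm, sub_add_eq_add_sub] at hnonneg
  exact sub_nonneg.mp hnonneg

end

lemma dotProduct_le_mul_sum_of_forall_le {R κ : Type*} [Semiring R] [PartialOrder R]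
    [IsOrderedRing R] [Fintype κ] {p z : κ → R} {φ : R} (hp : ∀ i, p i ≤ φ) (hz : 0 ≤ z) :
    p ⬝ᵥ z ≤ φ * ∑ i, z i := by
  rw [Finset.mul_sum]
  exact Finset.sum_le_sum fun i _ => mul_le_mul_of_nonneg_right (hp i) (hz i)

section

variable {K ι κ : Type*} [Field K] [LinearOrder K] [IsStrictOrderedRing K]
  [StarRing K] [TrivialStar K] [Fintype ι] [Fintype κ]
  {H : Matrix ι ι K} {c xhat : ι → K} {A : Matrix κ ι K} {b pihat : κ → K}

lemma neg_half_add_dotProduct_mulVec_le_of_stationary (hH : H.PosSemidef)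
    (hstat : H *ᵥ xhat + c - Aᵀ *ᵥ pihat = 0) (x : ι → K) :
    -(1 / 2) * (xhat ⬝ᵥ H *ᵥ xhat) + A *ᵥ x ⬝ᵥ pihat ≤
      (1 / 2) * (x ⬝ᵥ H *ᵥ x) + c ⬝ᵥ x := by
  have hlin : A *ᵥ x ⬝ᵥ pihat = x ⬝ᵥ H *ᵥ xhat + c ⬝ᵥ x := by
    rw [dotProduct_comm, ← dotProduct_transpose_mulVec, ← sub_eq_zero.mp hstat, dotProduct_add,
      dotProduct_comm x c]
  have hconvex := two_mul_dotProduct_mulVec_le_add_of_posSemidef hH x xhat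
  linarith

theorem penalized_objective_bounded_below_general (hH : H.PosSemidef)
    (hdeq : H *ᵥ xhat + c - Aᵀ *ᵥ pihat = 0) (hdpos : 0 ≤ pihat)
    {φ : K} (hφ : ∀ i, pihat i ≤ φ) {x : ι → K} {z : κ → K}
    (hxz : b ≤ A *ᵥ x + z) (hz : 0 ≤ z) :
    -(1 / 2) * (xhat ⬝ᵥ H *ᵥ xhat) + b ⬝ᵥ pihat ≤
      (1 / 2) * (x ⬝ᵥ H *ᵥ x) + c ⬝ᵥ x + φ * ∑ i, z i :=
  calc
    -(1 / 2) * (xhat ⬝ᵥ H *ᵥ xhat) + b ⬝ᵥ pihat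
      ≤ -(1 / 2) * (xhat ⬝ᵥ H *ᵥ xhat) + (A *ᵥ x + z) ⬝ᵥ pihat := by
        gcongr
        exact dotProduct_le_dotProduct_of_nonneg_right hxz hdpos
    _ = -(1 / 2) * (xhat ⬝ᵥ H *ᵥ xhat) + A *ᵥ x ⬝ᵥ pihat + pihat ⬝ᵥ z := by
        rw [add_dotProduct, dotProduct_comm z, add_assoc]
    _ ≤ (1 / 2) * (x ⬝ᵥ H *ᵥ x) + c ⬝ᵥ x + φ * ∑ i, z i :=
        add_le_add (neg_half_add_dotProduct_mulVec_le_of_stationary hH hdeq x)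
          (dotProduct_le_mul_sum_of_forall_le hφ hz)

end

/-- If (x̂, π̂) is dual-feasible and φ ≥ ‖π̂‖∞, then every (x, z)
feasible for (P_φ) satisfies f(x) + φ·1ᵀz ≥ −(1/2)x̂ᵀHx̂ + bᵀπ̂. -/
theorem penalized_objective_bounded_below
    {n m : ℕ} (H : Matrix (Fin n) (Fin n) ℝ) (hH : H.PosSemidef)
    (c : Fin n → ℝ) (A : Matrix (Fin m) (Fin n) ℝ) (b : Fin m → ℝ)
    (xhat : Fin n → ℝ) (pihat : Fin m → ℝ)
    (hdeq : H.mulVec xhat + c - Aᵀ.mulVec pihat = 0) (hdpos : 0 ≤ pihat)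
    (φ : ℝ) (hφ : ‖pihat‖ ≤ φ) :
    ∀ x : Fin n → ℝ, ∀ z : Fin m → ℝ, b ≤ A.mulVec x + z → 0 ≤ z →
      (-(1 / 2) * (xhat ⬝ᵥ H.mulVec xhat) + b ⬝ᵥ pihat) ≤
        qObj H c x + φ * (∑ i, z i) := by
  intro x z hxz hz
  exact penalized_objective_bounded_below_general hH hdeq hdpos
    (fun i => (le_abs_self _).trans ((norm_le_pi_norm pihat i).trans hφ)) hxz hz
end

section
/- Assume the set of optimal solutions of (P) — points x with Ax ≥ b that minimize f over {x : Ax ≥ b} — is nonempty and bounded. Then for every φ > 0, every ρ > 0, and every α ∈ ℝ, the set {(x, z) ∈ ℝ^n × ℝ^m : z ≥ 0, Ax + z ≥ b, f(x) + φ·1ᵀz ≤ α, ‖z‖∞ ≤ ρ} is bounded. (Third claim of Lemma 2.0.) -/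
/-!
Solvability of the program with optimal value `v` says that the convex function
`x ↦ (f x - v)⁺ + ∑ i, (b i - (A x) i)⁺` has the optimal set as its zero sublevel set. A convex
function on a finite-dimensional space with one nonempty bounded sublevel set grows at least
linearly: by compactness it exceeds its value at some point `x₀` by a fixed amount on a sphere about
`x₀`, and convexity along rays from `x₀` extends this gap proportionally outwards. Hence all its
sublevel sets are bounded. A bound on `z` bounds both the violation `b - A x` and the penalty, so
it places every `x` of the relaxed set in one of these sublevel sets.
-/

open Matrix Filter

open Set Bornology

theorem convexOn_quadraticForm {𝕜 E : Type*} [Field 𝕜] [LinearOrder 𝕜] [IsStrictOrderedRing 𝕜]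
    [AddCommGroup E] [Module 𝕜 E] {Q : QuadraticForm 𝕜 E} (hQ : ∀ x, 0 ≤ Q x) :
    ConvexOn 𝕜 univ Q := by
  refine ⟨convex_univ, fun x _ y _ s t hs ht hst => ?_⟩
  obtain rfl : t = 1 - s := by linear_combination hst
  have gap : s • Q x + (1 - s) • Q y - Q (s • x + (1 - s) • y) = s * (1 - s) * Q (x - y) := by
    rw [sub_eq_add_neg x y]
    simp only [QuadraticMap.map_add Q, QuadraticMap.map_smul, QuadraticMap.map_neg,
      QuadraticMap.polar_smul_left, QuadraticMap.polar_smul_right, QuadraticMap.polar_neg_right,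
      smul_eq_mul]
    ring
  linarith [mul_nonneg (mul_nonneg hs ht) (hQ (x - y))]

theorem convexOn_qObj {n : ℕ} {H : Matrix (Fin n) (Fin n) ℝ} (hH : H.PosSemidef)
    (c : Fin n → ℝ) : ConvexOn ℝ univ (qObj H c) := by
  have quadratic : ConvexOn ℝ univ fun x : Fin n → ℝ => x ⬝ᵥ H.mulVec x := by
    refine (convexOn_quadraticForm (Q := H.toQuadraticForm') fun x => ?_).congr fun x _ => ?_
    · simpa [toQuadraticForm', toLinearMap₂'_apply'] using hH.dotProduct_mulVec_nonneg x
    · simp [toQuadraticForm', toLinearMap₂'_apply']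
  exact (quadratic.smul (by norm_num : (0 : ℝ) ≤ 1 / 2)).add
    ((dotProductBilin ℝ ℝ c).convexOn convex_univ)

theorem convexOn_finset_sum {𝕜 E β ι : Type*} [Semiring 𝕜] [PartialOrder 𝕜] [AddCommMonoid E]
    [SMul 𝕜 E] [AddCommMonoid β] [PartialOrder β] [IsOrderedAddMonoid β] [Module 𝕜 β]
    {s : Set E} (hs : Convex 𝕜 s) {f : ι → E → β} {t : Finset ι}
    (hf : ∀ i ∈ t, ConvexOn 𝕜 s (f i)) : ConvexOn 𝕜 s (∑ i ∈ t, f i) :=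
  Finset.sum_induction f (ConvexOn 𝕜 s) (fun _ _ => ConvexOn.add) (convexOn_const 0 hs) hf

theorem exists_sphere_gap_of_isBounded_sublevel {X : Type*} [PseudoMetricSpace X] [ProperSpace X]
    {f : X → ℝ} (hf : Continuous f) {x₀ : X} (hbd : IsBounded {x | f x ≤ f x₀}) :
    ∃ R > 0, ∃ ε > 0, ∀ y ∈ Metric.sphere x₀ R, f x₀ + ε ≤ f y := by
  obtain ⟨R, hR, hball⟩ := hbd.subset_ball_lt 0 x₀
  have hlt : ∀ y ∈ Metric.sphere x₀ R, f x₀ < f y := fun y hy => by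
    by_contra! hle
    exact (Metric.mem_ball.1 (hball hle)).ne hy
  obtain ⟨v, hv, hvle⟩ := (isCompact_sphere x₀ R).exists_forall_le' hf.continuousOn hlt
  exact ⟨R, hR, v - f x₀, sub_pos.2 hv, fun y hy => by linarith [hvle y hy]⟩

section NormedSpace

variable {E : Type*} [NormedAddCommGroup E] [NormedSpace ℝ E]

theorem linear_growth_of_convexOn {f : E → ℝ} (hf : ConvexOn ℝ univ f) {x₀ x : E} {R ε : ℝ}
    (hR : 0 < R) (hsphere : ∀ y ∈ Metric.sphere x₀ R, f x₀ + ε ≤ f y) (hx : R ≤ ‖x - x₀‖) :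
    f x₀ + ε / R * ‖x - x₀‖ ≤ f x := by
  have hpos : 0 < ‖x - x₀‖ := hR.trans_le hx
  set t := R / ‖x - x₀‖ with ht
  have ht₀ : 0 < t := div_pos hR hpos
  have ht₁ : t ≤ 1 := (div_le_one hpos).2 hx
  set y := (1 - t) • x₀ + t • x with hy
  have hy_sphere : y ∈ Metric.sphere x₀ R := by
    have hsub : y - x₀ = t • (x - x₀) := by rw [hy]; module
    rw [mem_sphere_iff_norm, hsub, norm_smul, Real.norm_of_nonneg ht₀.le, ht,
      div_mul_cancel₀ _ hpos.ne']
  have gap : ε ≤ t * (f x - f x₀) := by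
    have hconv : f y ≤ (1 - t) * f x₀ + t * f x :=
      hf.2 (mem_univ x₀) (mem_univ x) (sub_nonneg.2 ht₁) ht₀.le (sub_add_cancel 1 t)
    linarith [hsphere y hy_sphere]
  calc f x₀ + ε / R * ‖x - x₀‖ = f x₀ + ε / t := by rw [ht]; field_simp
    _ ≤ f x₀ + (f x - f x₀) := by gcongr; exact (div_le_iff₀' ht₀).2 gap
    _ = f x := add_sub_cancel _ _

variable [FiniteDimensional ℝ E]

theorem isBounded_sublevel_of_convexOn {f : E → ℝ} (hf : ConvexOn ℝ univ f) {β : ℝ}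
    (hne : {x | f x ≤ β}.Nonempty) (hbd : IsBounded {x | f x ≤ β}) (γ : ℝ) :
    IsBounded {x | f x ≤ γ} := by
  obtain ⟨x₀, hx₀⟩ := hne
  have := FiniteDimensional.proper_real E
  have hbd₀ : IsBounded {x | f x ≤ f x₀} :=
    hbd.subset fun x (hx : f x ≤ f x₀) => hx.trans hx₀
  obtain ⟨R, hR, ε, hε, hsphere⟩ :=
    exists_sphere_gap_of_isBounded_sublevel hf.locallyLipschitz.continuous hbd₀
  refine (Metric.isBounded_closedBall (x := x₀) (r := max R ((γ - f x₀) / (ε / R)))).subset ?_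
  intro x (hx : f x ≤ γ)
  rw [mem_closedBall_iff_norm, le_max_iff]
  refine (le_total ‖x - x₀‖ R).imp id fun hfar => ?_
  rw [le_div_iff₀' (div_pos hε hR)]
  linarith [linear_growth_of_convexOn hf hR hsphere hfar]

theorem isBounded_setOf_forall_le_of_convexOn {ι : Type*} [Finite ι] {g : ι → E → ℝ}
    (hg : ∀ i, ConvexOn ℝ univ (g i)) {β : ι → ℝ} (hne : {x | ∀ i, g i x ≤ β i}.Nonempty)
    (hbd : IsBounded {x | ∀ i, g i x ≤ β i}) (γ : ι → ℝ) :
    IsBounded {x | ∀ i, g i x ≤ γ i} := by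
  have := Fintype.ofFinite ι
  let violation : E → ℝ := ∑ i, fun x => max (g i x - β i) 0
  have apply_violation (x : E) : violation x = ∑ i, max (g i x - β i) 0 := by
    simp only [violation, Finset.sum_apply]
  have hconvex : ConvexOn ℝ univ violation := convexOn_finset_sum convex_univ fun i _ =>
    ((hg i).add_const (-β i)).sup (convexOn_const 0 convex_univ)
  have hzero : {x | violation x ≤ 0} = {x | ∀ i, g i x ≤ β i} := by
    ext x
    have hnonneg : ∀ i ∈ Finset.univ, 0 ≤ max (g i x - β i) 0 := fun _ _ => le_max_right _ _
    simp only [mem_ofPred_eq, apply_violation, (Finset.sum_nonneg hnonneg).ge_iff_eq',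
      Finset.sum_eq_zero_iff_of_nonneg hnonneg, Finset.mem_univ, true_imp_iff, max_eq_right_iff,
      sub_nonpos]
  rw [← hzero] at hne hbd
  refine (isBounded_sublevel_of_convexOn hconvex hne hbd (∑ i, max (γ i - β i) 0)).subset ?_
  intro x hx
  rw [mem_ofPred_eq, apply_violation]
  gcongr with i
  exact hx i

theorem isBounded_relaxed_sublevel_of_isBounded_optimal {ι : Type*} [Finite ι]
    {f : E → ℝ} (hf : ConvexOn ℝ univ f) {g : E → ι → ℝ}
    (hg : ∀ i, ConcaveOn ℝ univ fun x => g x i) {b : ι → ℝ}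
    (hne : {x | b ≤ g x ∧ ∀ x', b ≤ g x' → f x ≤ f x'}.Nonempty)
    (hbd : IsBounded {x | b ≤ g x ∧ ∀ x', b ≤ g x' → f x ≤ f x'}) (b' : ι → ℝ) (γ : ℝ) :
    IsBounded {x | b' ≤ g x ∧ f x ≤ γ} := by
  obtain ⟨x₀, hx₀, hmin⟩ := hne
  let system : Option ι → E → ℝ := fun o => o.elim f fun i x => -g x i
  let bound (d : ι → ℝ) (v : ℝ) : Option ι → ℝ := fun o => o.elim v fun i => -d i
  have hsystem (d : ι → ℝ) (v : ℝ) :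
      {x | ∀ o, system o x ≤ bound d v o} = {x | d ≤ g x ∧ f x ≤ v} := by
    ext x
    simp [system, bound, Option.forall, Pi.le_def, and_comm]
  have hconvex : ∀ o, ConvexOn ℝ univ (system o) := Option.forall.2 ⟨hf, fun i => (hg i).neg⟩
  rw [← hsystem]
  refine isBounded_setOf_forall_le_of_convexOn hconvex (β := bound b (f x₀)) ?_ ?_ _
  · rw [hsystem]
    exact ⟨x₀, hx₀, le_rfl⟩
  · rw [hsystem]
    exact hbd.subset fun x hx => ⟨hx.1, fun x' hx' => hx.2.trans (hmin x' hx')⟩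

theorem level_sets_with_bounded_relaxation_are_bounded_general {ι : Type*} [Fintype ι]
    {f : E → ℝ} (hf : ConvexOn ℝ univ f) {g : E → ι → ℝ}
    (hg : ∀ i, ConcaveOn ℝ univ fun x => g x i) {b : ι → ℝ}
    (hne : {x | b ≤ g x ∧ ∀ x', b ≤ g x' → f x ≤ f x'}.Nonempty)
    (hbd : IsBounded {x | b ≤ g x ∧ ∀ x', b ≤ g x' → f x ≤ f x'}) (φ ρ α : ℝ) :
    IsBounded {q : E × (ι → ℝ) |
      b ≤ g q.1 + q.2 ∧ f q.1 + φ * (∑ i, q.2 i) ≤ α ∧ ‖q.2‖ ≤ ρ} := by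
  refine ((isBounded_relaxed_sublevel_of_isBounded_optimal hf hg hne hbd (fun i => b i - ρ)
    (α + |φ| * (Fintype.card ι * ρ))).prod
      (Metric.isBounded_closedBall (x := (0 : ι → ℝ)) (r := ρ))).subset ?_
  rintro ⟨x, z⟩ ⟨hfeas : b ≤ g x + z, hobj : f x + φ * ∑ i, z i ≤ α, hz : ‖z‖ ≤ ρ⟩
  refine ⟨⟨fun i => ?_, ?_⟩, mem_closedBall_zero_iff.2 hz⟩
  · have hzi : z i ≤ ρ := (le_abs_self _).trans ((norm_le_pi_norm z i).trans hz)
    have hfeas_i : b i ≤ g x i + z i := hfeas i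
    change b i - ρ ≤ g x i
    linarith
  · have hpenalty : |φ * ∑ i, z i| ≤ |φ| * (Fintype.card ι * ρ) := by
      rw [abs_mul]
      gcongr
      calc |∑ i, z i| ≤ ∑ i, |z i| := Finset.abs_sum_le_sum_abs _ _
        _ ≤ Fintype.card ι * ‖z‖ := by
          simpa using Pi.sum_norm_apply_le_norm z
        _ ≤ Fintype.card ι * ρ := by gcongr
    change f x ≤ α + |φ| * (Fintype.card ι * ρ)
    linarith [neg_le_of_abs_le hpenalty]

end NormedSpace

/-- If the optimal solution set of (P) is nonempty and bounded, then
for every φ > 0, ρ > 0, α ∈ ℝ the set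
{(x,z) : z ≥ 0, Ax + z ≥ b, f(x) + φ·1ᵀz ≤ α, ‖z‖∞ ≤ ρ} is bounded. -/
theorem level_sets_with_bounded_relaxation_are_bounded
    {n m : ℕ} (H : Matrix (Fin n) (Fin n) ℝ) (hH : H.PosSemidef)
    (c : Fin n → ℝ) (A : Matrix (Fin m) (Fin n) ℝ) (b : Fin m → ℝ)
    (hne : {x : Fin n → ℝ | b ≤ A.mulVec x ∧
      ∀ x' : Fin n → ℝ, b ≤ A.mulVec x' → qObj H c x ≤ qObj H c x'}.Nonempty)
    (hbd : Bornology.IsBounded {x : Fin n → ℝ | b ≤ A.mulVec x ∧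
      ∀ x' : Fin n → ℝ, b ≤ A.mulVec x' → qObj H c x ≤ qObj H c x'})
    (φ : ℝ) (hφ : 0 < φ) (ρ : ℝ) (hρ : 0 < ρ) (α : ℝ) :
    Bornology.IsBounded {q : (Fin n → ℝ) × (Fin m → ℝ) |
      0 ≤ q.2 ∧ b ≤ A.mulVec q.1 + q.2 ∧
      qObj H c q.1 + φ * (∑ i, q.2 i) ≤ α ∧ ‖q.2‖ ≤ ρ} :=
  (level_sets_with_bounded_relaxation_are_bounded_general (convexOn_qObj hH c)
    (fun i => (LinearMap.proj i ∘ₗ A.mulVecLin).concaveOn convex_univ) hne hbd φ ρ α).subset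
    fun _ hq => hq.2
end

section
/- Let φ > 0 and suppose (x*, z*, π*, ξ*) ∈ ℝ^n × ℝ^m × ℝ^m × ℝ^m satisfies the optimality conditions of the penalized primal–dual pair: Hx* + c − Aᵀπ* = 0, π* + ξ* = φ·1, s*ᵢπ*ᵢ = 0 and z*ᵢξ*ᵢ = 0 for all i, and s* ≥ 0, z* ≥ 0, π* ≥ 0, ξ* ≥ 0, where s* := Ax* + z* − b. If φ > ‖π*‖∞, then z* = 0; moreover Ax* ≥ b, π* ≥ 0, Hx* + c − Aᵀπ* = 0, π*ᵢ(Ax* − b)ᵢ = 0 for all i, and x* is an optimal solution of (P). (Lemma 2.1: exactness of the ℓ1 penalty.) -/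
open Matrix Filter

/-!
Where the multiplier `p i` stays strictly below the penalty weight, `ξ i` is nonzero, so
complementarity forces `z i = 0`. The penalized optimality conditions then reduce to the KKT
conditions at `x`, under which the gradient of the objective satisfies
`(H *ᵥ x + c) ⬝ᵥ (y - x) = p ⬝ᵥ (A *ᵥ y - b) ≥ 0` for every feasible `y`; convexity turns this
first-order inequality into global optimality.
-/

section QuadraticProgram

variable {ι κ R : Type*} [Fintype ι]

/-- The objective `x ↦ ½ xᵀHx + cᵀx` of a quadratic program over a field `R`, with variables
indexed by a finite type; `qObj` is the instance `R = ℝ`, `ι = Fin n`. -/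
def quadObj [Field R] (H : Matrix ι ι R) (c x : ι → R) : R :=
  (1 / 2) * (x ⬝ᵥ H *ᵥ x) + c ⬝ᵥ x

/-- The Karush–Kuhn–Tucker conditions at `x`, with multipliers `p`, for minimizing `quadObj H c`
subject to `b ≤ A *ᵥ x`. -/
structure IsKKTPoint [Fintype κ] [CommRing R] [LE R] (H : Matrix ι ι R) (c : ι → R)
    (A : Matrix κ ι R) (b : κ → R) (x : ι → R) (p : κ → R) : Prop where
  stationary : H *ᵥ x + c - Aᵀ *ᵥ p = 0
  primal_feasible : b ≤ A *ᵥ x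
  dual_feasible : 0 ≤ p
  complementary : ∀ i, p i * (A *ᵥ x - b) i = 0

theorem quadObj_eq_add_of_isSymm [Field R] [NeZero (2 : R)] {H : Matrix ι ι R} (hH : H.IsSymm)
    (c x y : ι → R) :
    quadObj H c y =
      quadObj H c x + (H *ᵥ x + c) ⬝ᵥ (y - x) + (1 / 2) * ((y - x) ⬝ᵥ H *ᵥ (y - x)) := by
  have hsymm : x ⬝ᵥ H *ᵥ y = y ⬝ᵥ H *ᵥ x := by
    rw [dotProduct_mulVec, ← mulVec_transpose, hH.eq, dotProduct_comm]
  have htwo : (2 : R) ≠ 0 := two_ne_zero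
  simp only [quadObj, mulVec_sub, add_dotProduct, dotProduct_sub, sub_dotProduct,
    dotProduct_comm (H *ᵥ x), hsymm]
  field_simp
  ring

theorem IsKKTPoint.gradient_dotProduct_sub [Fintype κ] [CommRing R] [LE R] {H : Matrix ι ι R}
    {c : ι → R} {A : Matrix κ ι R} {b : κ → R} {x : ι → R} {p : κ → R}
    (h : IsKKTPoint H c A b x p) (y : ι → R) :
    (H *ᵥ x + c) ⬝ᵥ (y - x) = p ⬝ᵥ (A *ᵥ y - b) := by
  have hslack : p ⬝ᵥ (A *ᵥ x - b) = 0 := Finset.sum_eq_zero fun i _ => h.complementary i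
  calc (H *ᵥ x + c) ⬝ᵥ (y - x)
      = (Aᵀ *ᵥ p) ⬝ᵥ (y - x) := by rw [sub_eq_zero.mp h.stationary]
    _ = p ⬝ᵥ A *ᵥ (y - x) := by rw [mulVec_transpose, dotProduct_mulVec]
    _ = p ⬝ᵥ (A *ᵥ y - b) - p ⬝ᵥ (A *ᵥ x - b) := by
      rw [mulVec_sub, ← dotProduct_sub, sub_sub_sub_cancel_right]
    _ = p ⬝ᵥ (A *ᵥ y - b) := by rw [hslack, sub_zero]

theorem eq_zero_of_mul_eq_zero_of_add_eq_of_ne [NonUnitalNonAssocSemiring R] [NoZeroDivisors R]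
    {z p ξ w : R} (hmul : z * ξ = 0) (hadd : p + ξ = w) (hne : p ≠ w) : z = 0 := by
  refine (mul_eq_zero.mp hmul).resolve_right fun hξ => hne ?_
  rw [← hadd, hξ, add_zero]

section OrderedField

variable [Field R] [LinearOrder R] [IsStrictOrderedRing R] [StarRing R] [TrivialStar R]
  {H : Matrix ι ι R}

theorem quadObj_add_gradient_le (hH : H.PosSemidef) (c x y : ι → R) :
    quadObj H c x + (H *ᵥ x + c) ⬝ᵥ (y - x) ≤ quadObj H c y := by
  have hsymm : H.IsSymm := isHermitian_iff_isSymm.mp hH.isHermitian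
  have hcurv : 0 ≤ (y - x) ⬝ᵥ H *ᵥ (y - x) := by
    simpa only [star_trivial] using hH.dotProduct_mulVec_nonneg (y - x)
  rw [quadObj_eq_add_of_isSymm hsymm c x y]
  exact le_add_of_nonneg_right (mul_nonneg one_half_pos.le hcurv)

variable [Fintype κ] {c : ι → R} {A : Matrix κ ι R} {b : κ → R}

theorem IsKKTPoint.isMinOn {x : ι → R} {p : κ → R} (h : IsKKTPoint H c A b x p)
    (hH : H.PosSemidef) : IsMinOn (quadObj H c) {y | b ≤ A *ᵥ y} x := by
  intro y hy
  have hdir : 0 ≤ (H *ᵥ x + c) ⬝ᵥ (y - x) := by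
    rw [h.gradient_dotProduct_sub y]
    exact dotProduct_nonneg_of_nonneg h.dual_feasible (sub_nonneg.mpr hy)
  exact (le_add_of_nonneg_right hdir).trans (quadObj_add_gradient_le hH c x y)

theorem exact_penalty_general (hH : H.PosSemidef) {x : ι → R} {z p ξ w : κ → R}
    (hstat : H *ᵥ x + c - Aᵀ *ᵥ p = 0) (hsum : p + ξ = w)
    (hcomp_slack : ∀ i, (A *ᵥ x + z - b) i * p i = 0) (hcomp_z : ∀ i, z i * ξ i = 0)
    (hslack : 0 ≤ A *ᵥ x + z - b) (hp : 0 ≤ p) (hpw : ∀ i, p i < w i) :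
    z = 0 ∧ IsKKTPoint H c A b x p ∧ IsMinOn (quadObj H c) {y | b ≤ A *ᵥ y} x := by
  obtain rfl : z = 0 := funext fun i =>
    eq_zero_of_mul_eq_zero_of_add_eq_of_ne (hcomp_z i) (congrFun hsum i) (hpw i).ne
  rw [add_zero] at hcomp_slack hslack
  have hkkt : IsKKTPoint H c A b x p :=
    ⟨hstat, sub_nonneg.mp hslack, hp, fun i => by rw [mul_comm, hcomp_slack i]⟩
  exact ⟨rfl, hkkt, hkkt.isMinOn hH⟩

end OrderedField

end QuadraticProgram

/-- Lemma 2.1, exactness of the ℓ1 penalty. -/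
theorem exact_penalty
    {n m : ℕ} (H : Matrix (Fin n) (Fin n) ℝ) (hH : H.PosSemidef)
    (c : Fin n → ℝ) (A : Matrix (Fin m) (Fin n) ℝ) (b : Fin m → ℝ)
    (φ : ℝ) (hφ : 0 < φ)
    (xstar : Fin n → ℝ) (zstar pistar xistar : Fin m → ℝ)
    (hstat : H.mulVec xstar + c - Aᵀ.mulVec pistar = 0)
    (hsum : pistar + xistar = fun _ => φ)
    (hcomp1 : ∀ i, (A.mulVec xstar + zstar - b) i * pistar i = 0)
    (hcomp2 : ∀ i, zstar i * xistar i = 0)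
    (hs : 0 ≤ A.mulVec xstar + zstar - b) (hz : 0 ≤ zstar)
    (hpi : 0 ≤ pistar) (hxi : 0 ≤ xistar)
    (hbig : ‖pistar‖ < φ) :
    zstar = 0 ∧ b ≤ A.mulVec xstar ∧ 0 ≤ pistar ∧
      H.mulVec xstar + c - Aᵀ.mulVec pistar = 0 ∧
      (∀ i, pistar i * (A.mulVec xstar - b) i = 0) ∧
      (∀ x : Fin n → ℝ, b ≤ A.mulVec x → qObj H c xstar ≤ qObj H c x) := by
  obtain ⟨hz0, hkkt, hmin⟩ := exact_penalty_general hH hstat hsum hcomp1 hcomp2 hs hpi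
    fun i => (le_abs_self _).trans_lt ((norm_le_pi_norm pistar i).trans_lt hbig)
  exact ⟨hz0, hkkt.primal_feasible, hpi, hstat, hkkt.complementary, fun _ hx => hmin hx⟩
end

section
/- If (x̂, π̂) is dual-feasible and (x, z) ∈ ℝ^n × ℝ^m satisfies Ax + z ≥ b and z ≥ 0, then −π̂ᵀz ≤ f(x) − ψ(x̂, π̂). (Inequality (2.6), a relaxed weak-duality inequality.) -/
open Matrix Filter

/-- The dual objective ψ(x̂, π̂) = −(1/2)x̂ᵀHx̂ + bᵀπ̂. -/
noncomputable def dObj {n m : ℕ} (H : Matrix (Fin n) (Fin n) ℝ) (b : Fin m → ℝ)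
    (xhat : Fin n → ℝ) (pihat : Fin m → ℝ) : ℝ :=
  -(1 / 2) * (xhat ⬝ᵥ H.mulVec xhat) + b ⬝ᵥ pihat

/-!
At a dual-feasible pair the duality gap `f(x) - ψ(x̂, π̂)` equals
`(1/2) (x - x̂)ᵀH(x - x̂) + π̂ᵀ(Ax - b)`: stationarity `Hx̂ + c = Aᵀπ̂` trades the linear term
`cᵀx` for `π̂ᵀAx - xᵀHx̂`, which completes the square. The first summand is nonnegative, and
`Ax - b ≥ -z` bounds the second.
-/

section DualityGap

variable {ι κ : Type*} [Fintype ι]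

lemma dotProduct_mulVec_sub_self {R : Type*} [CommRing R] {H : Matrix ι ι R} (hH : H.IsSymm)
    (x y : ι → R) :
    (x - y) ⬝ᵥ H *ᵥ (x - y) = x ⬝ᵥ H *ᵥ x - 2 * (x ⬝ᵥ H *ᵥ y) + y ⬝ᵥ H *ᵥ y := by
  have cross_symm : y ⬝ᵥ H *ᵥ x = x ⬝ᵥ H *ᵥ y := by
    simpa only [hH.eq] using dotProduct_transpose_mulVec H y x
  rw [mulVec_sub, dotProduct_sub, sub_dotProduct, sub_dotProduct, cross_symm]
  ring

variable [Fintype κ]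

lemma quadratic_duality_gap_eq {K : Type*} [Field K] [NeZero (2 : K)] {H : Matrix ι ι K}
    (hH : H.IsSymm) {c : ι → K} {A : Matrix κ ι K} {xhat : ι → K} {pihat : κ → K}
    (hdeq : H *ᵥ xhat + c - Aᵀ *ᵥ pihat = 0) (b : κ → K) (x : ι → K) :
    ((1 / 2) * (x ⬝ᵥ H *ᵥ x) + c ⬝ᵥ x) - (-(1 / 2) * (xhat ⬝ᵥ H *ᵥ xhat) + b ⬝ᵥ pihat) =
      (1 / 2) * ((x - xhat) ⬝ᵥ H *ᵥ (x - xhat)) + pihat ⬝ᵥ (A *ᵥ x - b) := by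
  have hstat : x ⬝ᵥ H *ᵥ xhat + c ⬝ᵥ x = pihat ⬝ᵥ A *ᵥ x := by
    rw [dotProduct_comm c x, ← dotProduct_add, sub_eq_zero.mp hdeq, dotProduct_transpose_mulVec]
  rw [dotProduct_mulVec_sub_self hH, dotProduct_sub, ← hstat, dotProduct_comm b]
  field_simp
  ring

theorem relaxed_weak_duality_general {K : Type*} [Field K] [LinearOrder K]
    [IsStrictOrderedRing K] [StarRing K] [TrivialStar K] {H : Matrix ι ι K} (hH : H.PosSemidef)
    {c : ι → K} {A : Matrix κ ι K} {b : κ → K} {xhat : ι → K} {pihat : κ → K}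
    (hdeq : H *ᵥ xhat + c - Aᵀ *ᵥ pihat = 0) (hdpos : 0 ≤ pihat)
    {x : ι → K} {z : κ → K} (hfeas : b ≤ A *ᵥ x + z) :
    -(pihat ⬝ᵥ z) ≤
      ((1 / 2) * (x ⬝ᵥ H *ᵥ x) + c ⬝ᵥ x) -
        (-(1 / 2) * (xhat ⬝ᵥ H *ᵥ xhat) + b ⬝ᵥ pihat) := by
  have hquad : 0 ≤ (x - xhat) ⬝ᵥ H *ᵥ (x - xhat) := by
    simpa only [star_trivial] using hH.dotProduct_mulVec_nonneg (x - xhat)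
  have hresidual : -z ≤ A *ᵥ x - b := neg_le_sub_iff_le_add.mpr hfeas
  calc
    -(pihat ⬝ᵥ z) = pihat ⬝ᵥ -z := (dotProduct_neg pihat z).symm
    _ ≤ pihat ⬝ᵥ (A *ᵥ x - b) := dotProduct_le_dotProduct_of_nonneg_left hresidual hdpos
    _ ≤ (1 / 2) * ((x - xhat) ⬝ᵥ H *ᵥ (x - xhat)) + pihat ⬝ᵥ (A *ᵥ x - b) :=
      le_add_of_nonneg_left (mul_nonneg one_half_pos.le hquad)
    _ = _ := (quadratic_duality_gap_eq (isHermitian_iff_isSymm.mp hH.isHermitian) hdeq b x).symm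

end DualityGap

/-- inequality (2.6), a relaxed weak-duality inequality. -/
theorem relaxed_weak_duality
    {n m : ℕ} (H : Matrix (Fin n) (Fin n) ℝ) (hH : H.PosSemidef)
    (c : Fin n → ℝ) (A : Matrix (Fin m) (Fin n) ℝ) (b : Fin m → ℝ)
    (xhat : Fin n → ℝ) (pihat : Fin m → ℝ)
    (hdeq : H.mulVec xhat + c - Aᵀ.mulVec pihat = 0) (hdpos : 0 ≤ pihat)
    (x : Fin n → ℝ) (z : Fin m → ℝ)
    (hfeas : b ≤ A.mulVec x + z) (hz : 0 ≤ z) :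
    -(pihat ⬝ᵥ z) ≤ qObj H c x - dObj H b xhat pihat :=
  relaxed_weak_duality_general hH hdeq hdpos hfeas
end

section
/- Suppose there exists a dual-feasible pair (x̂, π̂). Let sequences (x^k)_{k≥0} ⊂ ℝ^n, (z^k)_{k≥0} ⊂ ℝ^m and a positive nondecreasing scalar sequence (φ_k)_{k≥0} satisfy: z^k ≥ 0 and Ax^k + z^k ≥ b for all k; f(x^k) + φ_k·1ᵀz^k ≤ f(x^{k−1}) + φ_k·1ᵀz^{k−1} for all k ≥ 1; and, if the sequence (z^k) is unbounded, then φ_k → ∞. Then the sequence (z^k) is bounded. (Lemma 3.3.) -/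
open Matrix Filter

/-!
Let `s k = 1ᵀ z k` and `ρ = ‖π̂‖∞`. Weak duality bounds `f (x k) + ρ * s k` below by the dual
objective `C`. Once the penalty `φ k` exceeds `ρ`, the merit function normalized as
`(f (x k) + φ k * s k - C) / (φ k - ρ)` is an upper bound for `s k`, and it is nonincreasing in `k`:
the descent condition decreases its numerator at a fixed penalty, and writing it as
`s k + (f (x k) + ρ * s k - C) / (φ k - ρ)` shows that it decreases in the penalty as well.
-/

section NormalizedMerit

variable {𝕜 : Type*} [Field 𝕜] [LinearOrder 𝕜] [IsStrictOrderedRing 𝕜] {C ρ q q' s s' t : 𝕜}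

/-- The penalty merit value `q + t * s`, for objective value `q`, infeasibility `s` and penalty `t`,
measured from the level `C` and divided by the excess of `t` over the threshold `ρ`. It is
meaningful only for `ρ < t`; at `t = ρ` it has the junk value `0`. -/
def normalizedMerit (C ρ q s t : 𝕜) : 𝕜 :=
  (q + t * s - C) / (t - ρ)

theorem normalizedMerit_eq_add_div (ht : ρ < t) :
    normalizedMerit C ρ q s t = s + (q + ρ * s - C) / (t - ρ) := by
  have hne : t - ρ ≠ 0 := (sub_pos.mpr ht).ne'
  rw [normalizedMerit]
  field_simp
  ring

theorem le_normalizedMerit (ht : ρ < t) (hC : C ≤ q + ρ * s) :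
    s ≤ normalizedMerit C ρ q s t := by
  rw [normalizedMerit_eq_add_div ht]
  exact le_add_of_nonneg_right (div_nonneg (sub_nonneg.mpr hC) (sub_pos.mpr ht).le)

theorem antitoneOn_normalizedMerit (hC : C ≤ q + ρ * s) :
    AntitoneOn (normalizedMerit C ρ q s) (Set.Ioi ρ) := by
  intro t ht t' ht' htt'
  rw [normalizedMerit_eq_add_div ht, normalizedMerit_eq_add_div ht']
  exact add_le_add_right (div_le_div_of_nonneg_left (sub_nonneg.mpr hC) (sub_pos.mpr ht)
    (sub_le_sub_right htt' ρ)) s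

theorem normalizedMerit_le_normalizedMerit (ht : ρ ≤ t) (h : q' + t * s' ≤ q + t * s) :
    normalizedMerit C ρ q' s' t ≤ normalizedMerit C ρ q s t :=
  div_le_div_of_nonneg_right (sub_le_sub_right h C) (sub_nonneg.mpr ht)

variable {φ q s : ℕ → 𝕜} {K : ℕ}

theorem antitoneOn_normalizedMerit_of_descent (hφ : Monotone φ) (hK : ρ < φ K)
    (hC : ∀ k, C ≤ q k + ρ * s k)
    (hdesc : ∀ k, q (k + 1) + φ (k + 1) * s (k + 1) ≤ q k + φ (k + 1) * s k) :
    AntitoneOn (fun k ↦ normalizedMerit C ρ (q k) (s k) (φ k)) (Set.Ici K) := by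
  refine antitoneOn_nat_Ici_of_succ_le fun k hk ↦ ?_
  have hk_lt : ρ < φ k := hK.trans_le (hφ hk)
  have hφ_le : φ k ≤ φ (k + 1) := hφ k.le_succ
  have hsucc_lt : ρ < φ (k + 1) := hk_lt.trans_le hφ_le
  calc
    normalizedMerit C ρ (q (k + 1)) (s (k + 1)) (φ (k + 1))
      ≤ normalizedMerit C ρ (q k) (s k) (φ (k + 1)) :=
        normalizedMerit_le_normalizedMerit hsucc_lt.le (hdesc k)
    _ ≤ normalizedMerit C ρ (q k) (s k) (φ k) :=
        antitoneOn_normalizedMerit (hC k) hk_lt hsucc_lt hφ_le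

theorem bddAbove_range_of_penalty_descent (hφ : Monotone φ) (hK : ρ < φ K)
    (hC : ∀ k, C ≤ q k + ρ * s k)
    (hdesc : ∀ k, q (k + 1) + φ (k + 1) * s (k + 1) ≤ q k + φ (k + 1) * s k) :
    BddAbove (Set.range s) := by
  refine (isBoundedUnder_of_eventually_le (a := normalizedMerit C ρ (q K) (s K) (φ K))
    ?_).bddAbove_range
  filter_upwards [eventually_ge_atTop K] with k hk
  calc
    s k ≤ normalizedMerit C ρ (q k) (s k) (φ k) := le_normalizedMerit (hK.trans_le (hφ hk)) (hC k)
    _ ≤ normalizedMerit C ρ (q K) (s K) (φ K) :=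
        antitoneOn_normalizedMerit_of_descent hφ hK hC hdesc Set.self_mem_Ici hk hk

end NormalizedMerit

section SupNorm

variable {ι : Type*} [Fintype ι]

theorem pi_norm_le_sum_norm {E : ι → Type*} [∀ i, SeminormedAddCommGroup (E i)] (v : ∀ i, E i) :
    ‖v‖ ≤ ∑ i, ‖v i‖ :=
  (pi_norm_le_iff_of_nonneg (Finset.sum_nonneg fun i _ ↦ norm_nonneg (v i))).mpr fun i ↦
    Finset.single_le_sum (fun j _ ↦ norm_nonneg (v j)) (Finset.mem_univ i)

theorem pi_norm_le_sum_of_nonneg {v : ι → ℝ} (hv : 0 ≤ v) : ‖v‖ ≤ ∑ i, v i := by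
  simpa only [Real.norm_of_nonneg (hv _)] using pi_norm_le_sum_norm v

theorem dotProduct_le_norm_mul_sum (u : ι → ℝ) {v : ι → ℝ} (hv : 0 ≤ v) :
    u ⬝ᵥ v ≤ ‖u‖ * ∑ i, v i := by
  rw [Finset.mul_sum]
  exact Finset.sum_le_sum fun i _ ↦
    mul_le_mul_of_nonneg_right ((Real.le_norm_self _).trans (norm_le_pi_norm u i)) (hv i)

end SupNorm

section WeakDuality

variable {n : ℕ} {ι : Type*} [Fintype ι] {H : Matrix (Fin n) (Fin n) ℝ}

/-- Dual feasibility of `(xhat, pihat)` for minimizing `qObj H c x` subject to `b ≤ A x`: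
the Lagrangian is stationary at `xhat` and the multipliers `pihat` are nonnegative. -/
structure IsDualFeasible (H : Matrix (Fin n) (Fin n) ℝ) (c : Fin n → ℝ)
    (A : Matrix ι (Fin n) ℝ) (xhat : Fin n → ℝ) (pihat : ι → ℝ) : Prop where
  stationary : H *ᵥ xhat + c - Aᵀ *ᵥ pihat = 0
  nonneg : 0 ≤ pihat

/-- The objective of the Wolfe dual of minimizing `qObj H c x` subject to `b ≤ A x`. On
dual-feasible pairs it is the Lagrangian at `xhat`, with `c` eliminated by stationarity. -/
noncomputable def dualObj (H : Matrix (Fin n) (Fin n) ℝ) (b : ι → ℝ) (xhat : Fin n → ℝ)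
    (pihat : ι → ℝ) : ℝ :=
  pihat ⬝ᵥ b - (1 / 2) * (xhat ⬝ᵥ H *ᵥ xhat)

theorem qObj_eq_tangent_add (hH : H.IsSymm) (c x y : Fin n → ℝ) :
    qObj H c x = (H *ᵥ y + c) ⬝ᵥ x - (1 / 2) * (y ⬝ᵥ H *ᵥ y) +
      (1 / 2) * ((x - y) ⬝ᵥ H *ᵥ (x - y)) := by
  have hcross : y ⬝ᵥ H *ᵥ x = x ⬝ᵥ H *ᵥ y := by
    simpa only [hH.eq] using dotProduct_transpose_mulVec H y x
  simp only [qObj, mulVec_sub, sub_dotProduct, dotProduct_sub, add_dotProduct, hcross,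
    dotProduct_comm (H *ᵥ y) x]
  ring

theorem tangent_le_qObj (hH : H.PosSemidef) (c x y : Fin n → ℝ) :
    (H *ᵥ y + c) ⬝ᵥ x - (1 / 2) * (y ⬝ᵥ H *ᵥ y) ≤ qObj H c x := by
  have hsymm : H.IsSymm := isHermitian_iff_isSymm.mp hH.isHermitian
  have hcurv : 0 ≤ (x - y) ⬝ᵥ H *ᵥ (x - y) := hH.dotProduct_mulVec_nonneg (x - y)
  rw [qObj_eq_tangent_add hsymm c x y]
  exact le_add_of_nonneg_right (mul_nonneg one_half_pos.le hcurv)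

variable {c xhat x : Fin n → ℝ} {A : Matrix ι (Fin n) ℝ} {b pihat z : ι → ℝ}

theorem IsDualFeasible.dualObj_le_qObj_add_dotProduct (h : IsDualFeasible H c A xhat pihat)
    (hH : H.PosSemidef) (hfeas : b ≤ A *ᵥ x + z) :
    dualObj H b xhat pihat ≤ qObj H c x + pihat ⬝ᵥ z := by
  have hpair : pihat ⬝ᵥ b ≤ (H *ᵥ xhat + c) ⬝ᵥ x + pihat ⬝ᵥ z := calc
    pihat ⬝ᵥ b ≤ pihat ⬝ᵥ (A *ᵥ x + z) := dotProduct_le_dotProduct_of_nonneg_left hfeas h.nonneg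
    _ = (Aᵀ *ᵥ pihat) ⬝ᵥ x + pihat ⬝ᵥ z := by
        rw [dotProduct_add, dotProduct_mulVec, mulVec_transpose]
    _ = (H *ᵥ xhat + c) ⬝ᵥ x + pihat ⬝ᵥ z := by rw [sub_eq_zero.mp h.stationary]
  have htangent := tangent_le_qObj hH c x xhat
  rw [dualObj]
  linarith

theorem IsDualFeasible.dualObj_le_qObj_add_norm_mul_sum (h : IsDualFeasible H c A xhat pihat)
    (hH : H.PosSemidef) (hfeas : b ≤ A *ᵥ x + z) (hz : 0 ≤ z) :
    dualObj H b xhat pihat ≤ qObj H c x + ‖pihat‖ * ∑ i, z i :=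
  (h.dualObj_le_qObj_add_dotProduct hH hfeas).trans
    (add_le_add_right (dotProduct_le_norm_mul_sum pihat hz) _)

end WeakDuality

theorem relaxation_sequence_bounded_general
    {n : ℕ} {ι : Type*} [Fintype ι] {H : Matrix (Fin n) (Fin n) ℝ} (hH : H.PosSemidef)
    {c : Fin n → ℝ} {A : Matrix ι (Fin n) ℝ} {b : ι → ℝ} {xhat : Fin n → ℝ} {pihat : ι → ℝ}
    (hdual : IsDualFeasible H c A xhat pihat)
    {x : ℕ → Fin n → ℝ} {z : ℕ → ι → ℝ} {φ : ℕ → ℝ} (hφ : Monotone φ)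
    (hz : ∀ k, 0 ≤ z k) (hfeas : ∀ k, b ≤ A *ᵥ x k + z k)
    (hdesc : ∀ k, qObj H c (x (k + 1)) + φ (k + 1) * (∑ i, z (k + 1) i) ≤
      qObj H c (x k) + φ (k + 1) * (∑ i, z k i))
    {K : ℕ} (hK : ‖pihat‖ < φ K) :
    ∃ M : ℝ, ∀ k, ‖z k‖ ≤ M := by
  have hlower : ∀ k, dualObj H b xhat pihat ≤ qObj H c (x k) + ‖pihat‖ * ∑ i, z k i := fun k ↦
    hdual.dualObj_le_qObj_add_norm_mul_sum hH (hfeas k) (hz k)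
  obtain ⟨M, hM⟩ := bddAbove_range_of_penalty_descent hφ hK hlower hdesc
  exact ⟨M, fun k ↦ (pi_norm_le_sum_of_nonneg (hz k)).trans (hM (Set.mem_range_self k))⟩

/-- Lemma 3.3: the sequence (z^k) is bounded. -/
theorem relaxation_sequence_bounded
    {n m : ℕ} (H : Matrix (Fin n) (Fin n) ℝ) (hH : H.PosSemidef)
    (c : Fin n → ℝ) (A : Matrix (Fin m) (Fin n) ℝ) (b : Fin m → ℝ)
    (xhat : Fin n → ℝ) (pihat : Fin m → ℝ)
    (hdeq : H.mulVec xhat + c - Aᵀ.mulVec pihat = 0) (hdpos : 0 ≤ pihat)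
    (x : ℕ → Fin n → ℝ) (z : ℕ → Fin m → ℝ) (φ : ℕ → ℝ)
    (hφpos : ∀ k, 0 < φ k) (hφmono : Monotone φ)
    (hzpos : ∀ k, 0 ≤ z k) (hfeas : ∀ k, b ≤ A.mulVec (x k) + z k)
    (hdesc : ∀ k : ℕ,
      qObj H c (x (k + 1)) + φ (k + 1) * (∑ i, z (k + 1) i) ≤
      qObj H c (x k) + φ (k + 1) * (∑ i, z k i))
    (hunb : (¬ ∃ M : ℝ, ∀ k, ‖z k‖ ≤ M) → Tendsto φ atTop atTop) :
    ∃ M : ℝ, ∀ k, ‖z k‖ ≤ M := by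
  by_contra hunbounded
  obtain ⟨K, hK⟩ := ((hunb hunbounded).eventually_gt_atTop ‖pihat‖).exists
  exact hunbounded
    (relaxation_sequence_bounded_general hH ⟨hdeq, hdpos⟩ hφmono hzpos hfeas hdesc hK)
end

section
/- Assume: (a) the only x ∈ ℝ^n with Hx = 0 and Ax = 0 is x = 0; and (b) there exist x̂ ∈ ℝ^n and π̂ ∈ ℝ^m with Ax̂ ≥ b, Hx̂ + c = Aᵀπ̂, and π̂ > 0 componentwise. Let sequences (x^k) ⊂ ℝ^n, (z^k), (π^k), (ξ^k) ⊂ ℝ^m and scalars φ_k > 0 satisfy, for all k: z^k ≥ 0, s^k := Ax^k + z^k − b ≥ 0, π^k ≥ 0, ξ^k ≥ 0. Suppose φ_k → ∞, the sequence (z^k) is bounded, and K ⊆ ℕ is an infinite index set such that the sequences (s^k ∘ π^k), (z^k ∘ ξ^k), (Hx^k + c − Aᵀπ^k), (π^k + ξ^k − φ_k·1), and ((Hx^k + c − Aᵀπ^k)ᵀx^k) are all bounded for k ∈ K. Then z^k → 0 as k → ∞ along K, and the subsequence (x^k)_{k∈K} is bounded. (Lemma 3.4.) -/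
open Matrix Filter

/-!
Let `s = Ax + z - b` and `r = Hx + c - Aᵀπ`, and compare `(x, π)` with the pair `(x̂, π̂)`.
Expanding `(x - x̂)ᵀH(x - x̂)` gives the identity
`(x - x̂)ᵀH(x - x̂) + π̂ᵀs + (π - π̂)ᵀz + πᵀ(Ax̂ - b) = rᵀ(x - x̂) + sᵀπ + π̂ᵀ(Ax̂ - b)`,
whose right-hand side is bounded. Since `π + ξ` is within a bounded distance of `φ·1` and `zᵀξ` is
bounded, `(π - π̂)ᵀz` is at least `(φ - O(1)) ∑ zᵢ - O(1)`. Hence `(x - x̂)ᵀH(x - x̂)`, `π̂ᵀs` and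
`(φ - O(1)) ∑ zᵢ`, all eventually nonnegative, are bounded: `φ → ∞` forces `z → 0`, positivity of
`π̂` bounds `s`, hence `A(x - x̂)`, and `x` is then bounded because `ker H ∩ ker A = 0`.
-/

open Asymptotics Topology

section BigO

variable {ι m n : Type*} [Fintype m] [Fintype n] {l : Filter ι}

lemma isBigO_one_atTop_inf_principal_iff {E : Type*} [NormedAddCommGroup E]
    {f : ℕ → E} {K : Set ℕ} :
    f =O[atTop ⊓ 𝓟 K] (fun _ => (1 : ℝ)) ↔ ∃ M, ∀ k ∈ K, ‖f k‖ ≤ M := by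
  constructor
  · intro h
    have hind : K.indicator f =O[atTop] (fun _ => (1 : ℝ)) := by
      obtain ⟨C, hC₀, hC⟩ := h.exists_nonneg
      refine IsBigO.of_bound C ?_
      filter_upwards [eventually_inf_principal.1 hC.bound] with k hk
      by_cases hkK : k ∈ K
      · simpa only [Set.indicator_of_mem hkK] using hk hkK
      · simpa only [Set.indicator_of_notMem hkK, norm_zero, norm_one, mul_one] using hC₀
    obtain ⟨M, hM⟩ := isBigO_one_nat_atTop_iff.1 hind
    exact ⟨M, fun k hk => by simpa only [Set.indicator_of_mem hk] using hM k⟩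
  · rintro ⟨M, hM⟩
    refine IsBigO.of_bound M (eventually_inf_principal.2 (.of_forall fun k hk => ?_))
    simpa only [norm_one, mul_one] using hM k hk

lemma isBigO_of_nonneg_of_le {f g : ι → ℝ} (hf : ∀ᶠ k in l, 0 ≤ f k)
    (hfg : ∀ᶠ k in l, f k ≤ g k) : f =O[l] g :=
  .of_norm_eventuallyLE (by
    filter_upwards [hf, hfg] with k h0 hle
    rwa [Real.norm_of_nonneg h0])

lemma isBigO_of_nonneg_of_add_add_le {f₁ f₂ f₃ g : ι → ℝ} (h₁ : ∀ᶠ k in l, 0 ≤ f₁ k)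
    (h₂ : ∀ᶠ k in l, 0 ≤ f₂ k) (h₃ : ∀ᶠ k in l, 0 ≤ f₃ k)
    (hle : ∀ᶠ k in l, f₁ k + f₂ k + f₃ k ≤ g k) : f₁ =O[l] g ∧ f₂ =O[l] g ∧ f₃ =O[l] g := by
  refine ⟨isBigO_of_nonneg_of_le h₁ ?_, isBigO_of_nonneg_of_le h₂ ?_,
    isBigO_of_nonneg_of_le h₃ ?_⟩ <;>
  · filter_upwards [h₁, h₂, h₃, hle] with k _ _ _ _
    linarith

lemma tendsto_sub_norm_atTop {E : Type*} [SeminormedAddCommGroup E] {f : ι → ℝ} {w : ι → E}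
    (hf : Tendsto f l atTop) (hw : w =O[l] (fun _ => (1 : ℝ))) :
    Tendsto (fun k => f k - ‖w k‖) l atTop :=
  .atTop_of_isBoundedUnder_le_add ((isBigO_one_iff ℝ).1 hw) (by simpa using hf)

lemma tendsto_zero_of_mul_isBigO_one {f g : ι → ℝ} (hf : Tendsto f l atTop)
    (hfg : (fun k => f k * g k) =O[l] (fun _ => (1 : ℝ))) : Tendsto g l (𝓝 0) := by
  have hlim : Tendsto (fun k => (f k)⁻¹ * (f k * g k)) l (𝓝 0) := by
    have := ((isLittleO_one_iff ℝ).2 hf.inv_tendsto_atTop).mul_isBigO hfg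
    simpa only [mul_one, isLittleO_one_iff, Pi.inv_apply] using this
  refine hlim.congr' ?_
  filter_upwards [hf.eventually_ne_atTop 0] with k hk using inv_mul_cancel_left₀ hk _

lemma isBigO_dotProduct_const {u : ι → m → ℝ} {g : ι → ℝ} (hu : u =O[l] g) (v : m → ℝ) :
    (fun k => u k ⬝ᵥ v) =O[l] g := by
  refine IsBigO.fun_sum fun i _ => ?_
  simpa only [mul_comm] using (isBigO_pi.1 hu i).const_mul_left (v i)

lemma isBigO_mulVec {u : ι → n → ℝ} {g : ι → ℝ} (hu : u =O[l] g) (M : Matrix m n ℝ) :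
    (fun k => M *ᵥ u k) =O[l] g :=
  isBigO_pi.2 fun i => by
    simpa only [mulVec, dotProduct_comm] using isBigO_dotProduct_const hu (M i)

lemma isBigO_dotProduct_of_pos_of_nonneg {w : m → ℝ} {v : ι → m → ℝ} (hw : ∀ i, 0 < w i)
    (hv : ∀ k, 0 ≤ v k) : v =O[l] (fun k => w ⬝ᵥ v k) := by
  refine isBigO_pi.2 fun i => ?_
  have hle : ∀ k, w i * v k i ≤ w ⬝ᵥ v k := fun k =>
    Finset.single_le_sum (f := fun j => w j * v k j)
      (fun j _ => mul_nonneg (hw j).le (hv k j)) (Finset.mem_univ i)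
  have hcoord : (fun k => w i * v k i) =O[l] (fun k => w ⬝ᵥ v k) :=
    isBigO_of_nonneg_of_le (.of_forall fun k => mul_nonneg (hw i).le (hv k i)) (.of_forall hle)
  exact (isBigO_const_mul_left_iff (hw i).ne').1 hcoord

lemma isBigO_one_of_dotProduct_self {v : ι → m → ℝ}
    (hv : (fun k => v k ⬝ᵥ v k) =O[l] (fun _ => (1 : ℝ))) : v =O[l] (fun _ => (1 : ℝ)) := by
  refine isBigO_pi.2 fun i => IsBigO.of_pow two_ne_zero ?_
  have hle : ∀ k, v k i ^ 2 ≤ v k ⬝ᵥ v k := fun k =>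
    (sq (v k i)).trans_le <| Finset.single_le_sum (f := fun j => v k j * v k j)
      (fun j _ => mul_self_nonneg _) (Finset.mem_univ i)
  have hsq : (fun k => v k i ^ 2) =O[l] (fun k => v k ⬝ᵥ v k) :=
    isBigO_of_nonneg_of_le (.of_forall fun k => sq_nonneg _) (.of_forall hle)
  simpa [Pi.pow_def] using hsq.trans hv

lemma isBigO_comp_of_ker_eq_bot {E F : Type*} [NormedAddCommGroup E] [NormedSpace ℝ E]
    [FiniteDimensional ℝ E] [NormedAddCommGroup F] [NormedSpace ℝ F] {f : E →ₗ[ℝ] F}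
    (hf : LinearMap.ker f = ⊥) (u : ι → E) : u =O[l] (fun k => f (u k)) := by
  obtain ⟨L, -, hL⟩ := f.exists_antilipschitzWith hf
  refine isBigO_of_le' (c := L) l fun k => ?_
  simpa only [map_zero, dist_zero_right] using hL.le_mul_dist (u k) 0

open scoped MatrixOrder in
lemma isBigO_one_mulVec_of_quadForm {H : Matrix n n ℝ} (hH : H.PosSemidef) {d : ι → n → ℝ}
    (hd : (fun k => d k ⬝ᵥ H *ᵥ d k) =O[l] (fun _ => (1 : ℝ))) :
    (fun k => H *ᵥ d k) =O[l] (fun _ => (1 : ℝ)) := by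
  classical
  obtain ⟨B, rfl⟩ := CStarAlgebra.nonneg_iff_eq_star_mul_self.mp hH.nonneg
  have hquad : ∀ k, d k ⬝ᵥ (star B * B) *ᵥ d k = B *ᵥ d k ⬝ᵥ B *ᵥ d k := fun k => by
    rw [star_eq_conjTranspose, conjTranspose_eq_transpose_of_trivial, ← mulVec_mulVec,
      dotProduct_mulVec, vecMul_transpose]
  simp only [hquad] at hd
  simpa only [mulVec_mulVec] using isBigO_mulVec (isBigO_one_of_dotProduct_self hd) (star B)

lemma isBigO_one_of_quadForm_of_mulVec {H : Matrix n n ℝ} (hH : H.PosSemidef) {A : Matrix m n ℝ}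
    (hker : ∀ x, H *ᵥ x = 0 → A *ᵥ x = 0 → x = 0) {d : ι → n → ℝ}
    (hHd : (fun k => d k ⬝ᵥ H *ᵥ d k) =O[l] (fun _ => (1 : ℝ)))
    (hAd : (fun k => A *ᵥ d k) =O[l] (fun _ => (1 : ℝ))) : d =O[l] (fun _ => (1 : ℝ)) := by
  have hinj : LinearMap.ker (H.mulVecLin.prod A.mulVecLin) = ⊥ :=
    LinearMap.ker_eq_bot'.2 fun x hx => hker x (congrArg Prod.fst hx) (congrArg Prod.snd hx)
  exact (isBigO_comp_of_ker_eq_bot hinj d).trans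
    ((isBigO_one_mulVec_of_quadForm hH hHd).prod_left hAd)

end BigO

section PrimalDual

variable {m n : Type*} [Fintype n]

/-- The slack `s = Ax + z - b` of the constraint `Ax ≥ b` relaxed by the elastic variable `z`. -/
def elasticSlack {R : Type*} [Ring R] (A : Matrix m n R) (b : m → R) (x : n → R) (z : m → R) :
    m → R :=
  A *ᵥ x + z - b

lemma mulVec_sub_eq_elasticSlack {R : Type*} [Ring R] (A : Matrix m n R) (b : m → R)
    (x xhat : n → R) (z : m → R) :
    A *ᵥ (x - xhat) = elasticSlack A b x z - z - (A *ᵥ xhat - b) := by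
  rw [elasticSlack, mulVec_sub]; abel

variable [Fintype m]

/-- The stationarity residual `Hx + c - Aᵀπ`, the gradient in `x` of the Lagrangian of the quadratic
program `min ½xᵀHx + cᵀx` subject to `Ax ≥ b`, with multiplier `π`. -/
def dualResidual {R : Type*} [Ring R] (H : Matrix n n R) (c : n → R) (A : Matrix m n R)
    (x : n → R) (π : m → R) : n → R :=
  H *ᵥ x + c - Aᵀ *ᵥ π

lemma quadForm_sub_add_gap_eq {R : Type*} [CommRing R] {H : Matrix n n R} {c : n → R}
    {A : Matrix m n R} {xhat : n → R} {pihat : m → R} (hdeq : H *ᵥ xhat + c = Aᵀ *ᵥ pihat)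
    (b : m → R) (x : n → R) (z π : m → R) :
    (x - xhat) ⬝ᵥ H *ᵥ (x - xhat) + pihat ⬝ᵥ elasticSlack A b x z + (π - pihat) ⬝ᵥ z
        + π ⬝ᵥ (A *ᵥ xhat - b)
      = dualResidual H c A x π ⬝ᵥ (x - xhat) + elasticSlack A b x z ⬝ᵥ π
        + pihat ⬝ᵥ (A *ᵥ xhat - b) := by
  have hH : H *ᵥ (x - xhat) = dualResidual H c A x π + Aᵀ *ᵥ (π - pihat) := by
    rw [dualResidual, mulVec_sub, mulVec_sub, ← hdeq]; abel
  have hquad : (x - xhat) ⬝ᵥ H *ᵥ (x - xhat) = dualResidual H c A x π ⬝ᵥ (x - xhat)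
      + (π - pihat) ⬝ᵥ (elasticSlack A b x z - z - (A *ᵥ xhat - b)) := by
    rw [hH, dotProduct_add, dotProduct_mulVec, vecMul_transpose,
      mulVec_sub_eq_elasticSlack A b x xhat z, dotProduct_comm, dotProduct_comm (π - pihat)]
  rw [hquad, dotProduct_comm (elasticSlack A b x z)]
  simp only [sub_dotProduct, dotProduct_sub]
  ring

lemma sub_norm_mul_one_dotProduct_le {z : m → ℝ} (hz : 0 ≤ z) (φ : ℝ) (w : m → ℝ) :
    (φ - ‖w‖) * (1 ⬝ᵥ z) ≤ ((fun _ => φ) + w) ⬝ᵥ z := by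
  rw [one_dotProduct, Finset.mul_sum]
  refine Finset.sum_le_sum fun i _ => mul_le_mul_of_nonneg_right ?_ (hz i)
  have hwi : -w i ≤ ‖w‖ := (neg_le_abs (w i)).trans (norm_le_pi_norm w i)
  simp only [Pi.add_apply]
  linarith

lemma quadForm_sub_add_slack_add_penalty_le {H : Matrix n n ℝ} {c : n → ℝ} {A : Matrix m n ℝ}
    {b : m → ℝ} {xhat : n → ℝ} {pihat : m → ℝ} (hfeas : b ≤ A *ᵥ xhat)
    (hdeq : H *ᵥ xhat + c = Aᵀ *ᵥ pihat) (x : n → ℝ) {z π : m → ℝ} (hz : 0 ≤ z) (hπ : 0 ≤ π)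
    (ξ : m → ℝ) (φ : ℝ) :
    (x - xhat) ⬝ᵥ H *ᵥ (x - xhat) + pihat ⬝ᵥ elasticSlack A b x z
        + (φ - ‖(π + ξ - fun _ => φ) - pihat‖) * (1 ⬝ᵥ z)
      ≤ dualResidual H c A x π ⬝ᵥ x - dualResidual H c A x π ⬝ᵥ xhat
        + (elasticSlack A b x z * π) ⬝ᵥ 1 + (z * ξ) ⬝ᵥ 1 + pihat ⬝ᵥ (A *ᵥ xhat - b) := by
  have hgap := quadForm_sub_add_gap_eq hdeq b x z π
  have hfeas' : 0 ≤ π ⬝ᵥ (A *ᵥ xhat - b) := dotProduct_nonneg_of_nonneg hπ (sub_nonneg.2 hfeas)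
  have hpenalty := sub_norm_mul_one_dotProduct_le hz φ ((π + ξ - fun _ => φ) - pihat)
  have hsplit : (fun _ => φ) + ((π + ξ - fun _ => φ) - pihat) = (π - pihat) + ξ := by abel
  have hmul : ∀ u v : m → ℝ, (u * v) ⬝ᵥ 1 = u ⬝ᵥ v := fun u v => by
    rw [dotProduct_one]; rfl
  rw [hsplit, add_dotProduct, dotProduct_comm ξ] at hpenalty
  rw [dotProduct_sub (dualResidual H c A x π)] at hgap
  rw [hmul, hmul]
  linarith

end PrimalDual

theorem z_to_zero_x_bounded_general {ι m n : Type*} [Fintype m] [Fintype n] {l : Filter ι}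
    {H : Matrix n n ℝ} (hH : H.PosSemidef) {c : n → ℝ} {A : Matrix m n ℝ} {b : m → ℝ}
    (hker : ∀ x, H *ᵥ x = 0 → A *ᵥ x = 0 → x = 0)
    {xhat : n → ℝ} {pihat : m → ℝ} (hfeas : b ≤ A *ᵥ xhat)
    (hdeq : H *ᵥ xhat + c = Aᵀ *ᵥ pihat) (hdpos : ∀ i, 0 < pihat i)
    {x : ι → n → ℝ} {z π ξ : ι → m → ℝ} {φ : ι → ℝ}
    (hz : ∀ k, 0 ≤ z k) (hs : ∀ k, 0 ≤ elasticSlack A b (x k) (z k)) (hπ : ∀ k, 0 ≤ π k)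
    (hφ : Tendsto φ l atTop)
    (hsπ : (fun k => elasticSlack A b (x k) (z k) * π k) =O[l] (fun _ => (1 : ℝ)))
    (hzξ : (fun k => z k * ξ k) =O[l] (fun _ => (1 : ℝ)))
    (hres : (fun k => dualResidual H c A (x k) (π k)) =O[l] (fun _ => (1 : ℝ)))
    (hπξ : (fun k => π k + ξ k - fun _ => φ k) =O[l] (fun _ => (1 : ℝ)))
    (hresx : (fun k => dualResidual H c A (x k) (π k) ⬝ᵥ x k) =O[l] (fun _ => (1 : ℝ))) :
    Tendsto z l (𝓝 0) ∧ x =O[l] (fun _ => (1 : ℝ)) := by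
  have hle := fun k =>
    quadForm_sub_add_slack_add_penalty_le hfeas hdeq (x k) (hz k) (hπ k) (ξ k) (φ k)
  have hrhs := (((hresx.sub (isBigO_dotProduct_const hres xhat)).add
    (isBigO_dotProduct_const hsπ 1)).add (isBigO_dotProduct_const hzξ 1)).add
    (isBigO_const_const (pihat ⬝ᵥ (A *ᵥ xhat - b)) one_ne_zero l)
  have hcoef : Tendsto (fun k => φ k - ‖(π k + ξ k - fun _ => φ k) - pihat‖) l atTop :=
    tendsto_sub_norm_atTop hφ (hπξ.sub (isBigO_const_const pihat one_ne_zero l))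
  obtain ⟨hquad, hslack, hpenalty⟩ := isBigO_of_nonneg_of_add_add_le
    (.of_forall fun k => hH.dotProduct_mulVec_nonneg (x k - xhat))
    (.of_forall fun k => dotProduct_nonneg_of_nonneg (fun i => (hdpos i).le) (hs k))
    ((hcoef.eventually_ge_atTop 0).mono fun k hk =>
      mul_nonneg hk (dotProduct_nonneg_of_nonneg zero_le_one (hz k)))
    (.of_forall hle)
  have hz_lim : Tendsto z l (𝓝 0) :=
    (isBigO_dotProduct_of_pos_of_nonneg (fun _ => one_pos) hz).trans_tendsto
      (tendsto_zero_of_mul_isBigO_one hcoef (hpenalty.trans hrhs))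
  have hs_bdd : (fun k => elasticSlack A b (x k) (z k)) =O[l] (fun _ => (1 : ℝ)) :=
    (isBigO_dotProduct_of_pos_of_nonneg hdpos hs).trans (hslack.trans hrhs)
  have hA_bdd : (fun k => A *ᵥ (x k - xhat)) =O[l] (fun _ => (1 : ℝ)) :=
    ((hs_bdd.sub (hz_lim.isBigO_one ℝ)).sub
      (isBigO_const_const (A *ᵥ xhat - b) one_ne_zero l)).congr_left
      fun k => (mulVec_sub_eq_elasticSlack A b (x k) xhat (z k)).symm
  have hd_bdd : (fun k => x k - xhat) =O[l] (fun _ => (1 : ℝ)) :=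
    isBigO_one_of_quadForm_of_mulVec hH hker (hquad.trans hrhs) hA_bdd
  refine ⟨hz_lim, ?_⟩
  simpa only [sub_add_cancel] using hd_bdd.add (isBigO_const_const xhat one_ne_zero l)

/-- Lemma 3.4: under the stated boundedness properties along the
infinite index set K, z^k → 0 along K and (x^k)_{k∈K} is bounded. -/
theorem z_to_zero_x_bounded
    {n m : ℕ} (H : Matrix (Fin n) (Fin n) ℝ) (hH : H.PosSemidef)
    (c : Fin n → ℝ) (A : Matrix (Fin m) (Fin n) ℝ) (b : Fin m → ℝ)
    (hker : ∀ x : Fin n → ℝ, H.mulVec x = 0 → A.mulVec x = 0 → x = 0)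
    (xhat : Fin n → ℝ) (pihat : Fin m → ℝ)
    (hfeas : b ≤ A.mulVec xhat)
    (hdeq : H.mulVec xhat + c = Aᵀ.mulVec pihat)
    (hdpos : ∀ i, 0 < pihat i)
    (x : ℕ → Fin n → ℝ) (z π ξ : ℕ → Fin m → ℝ) (φ : ℕ → ℝ)
    (hφpos : ∀ k, 0 < φ k)
    (hz : ∀ k, 0 ≤ z k) (hs : ∀ k, 0 ≤ A.mulVec (x k) + z k - b)
    (hπ : ∀ k, 0 ≤ π k) (hξ : ∀ k, 0 ≤ ξ k)
    (hφ : Tendsto φ atTop atTop)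
    (hzbd : ∃ M : ℝ, ∀ k, ‖z k‖ ≤ M)
    (K : Set ℕ) (hK : K.Infinite)
    (hbd1 : ∃ M : ℝ, ∀ k ∈ K, ‖(A.mulVec (x k) + z k - b) * π k‖ ≤ M)
    (hbd2 : ∃ M : ℝ, ∀ k ∈ K, ‖z k * ξ k‖ ≤ M)
    (hbd3 : ∃ M : ℝ, ∀ k ∈ K, ‖H.mulVec (x k) + c - Aᵀ.mulVec (π k)‖ ≤ M)
    (hbd4 : ∃ M : ℝ, ∀ k ∈ K, ‖π k + ξ k - fun _ => φ k‖ ≤ M)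
    (hbd5 : ∃ M : ℝ, ∀ k ∈ K,
      |(H.mulVec (x k) + c - Aᵀ.mulVec (π k)) ⬝ᵥ x k| ≤ M) :
    Tendsto (fun k => z k) (atTop ⊓ Filter.principal K) (nhds 0) ∧
    ∃ M : ℝ, ∀ k ∈ K, ‖x k‖ ≤ M := by
  have hO {E : Type} [NormedAddCommGroup E] {f : ℕ → E} :=
    isBigO_one_atTop_inf_principal_iff (f := f) (K := K)
  exact (z_to_zero_x_bounded_general hH hker hfeas hdeq hdpos hz hs hπ (hφ.mono_left inf_le_left)
    (hO.2 hbd1) (hO.2 hbd2) (hO.2 hbd3) (hO.2 hbd4) (hO.2 hbd5)).imp_right hO.1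
end

section
/- Let sequences (x^k) ⊂ ℝ^n, (z^k), (π^k), (ξ^k) ⊂ ℝ^m and scalars φ_k > 0 satisfy, for all k: z^k ≥ 0, s^k := Ax^k + z^k − b ≥ 0, π^k ≥ 0, ξ^k ≥ 0, and φ_k → ∞. Suppose K ⊆ ℕ is an infinite index set such that for k ∈ K the sequences (s^k ∘ π^k), (Hx^k + c − Aᵀπ^k), (π^k + ξ^k − φ_k·1), and (φ_k / max{1, ‖π^k‖∞}) are bounded, z^k → 0 along K, and (x^k)_{k∈K} is bounded. Then for every limit point x* of (x^k)_{k∈K} there exists π̄ ∈ ℝ^m with π̄ ≥ 0, π̄ ≠ 0, Aᵀπ̄ = 0, and π̄ᵢ·(Ax* − b)ᵢ = 0 for every i. (Lemma 3.5.) -/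
open Matrix Filter

/-!
Since `φ k → ∞` while `φ k / max 1 ‖π k‖` stays bounded, `‖π k‖ → ∞`. Along an ultrafilter on which
`x k → x*`, the directions `π k / ‖π k‖` converge to a unit vector `p`, by compactness of the sphere,
and `p` is the multiplier. Indeed `Aᵀ π k` is bounded there, being a bounded distance from the
convergent `H x k + c`, and so is `s k * π k` with `s k = A x k + z k - b → A x* - b`; dividing both
by `‖π k‖` gives `Aᵀ p = 0` and `(A x* - b) * p = 0`.
-/

open NormedSpace (normalize)
open scoped Topology

section Divergence

variable {ι α : Type*} {l : Filter ι}

theorem isBoundedUnder_le_inf_principal [LE α] {s : Set ι} {f : ι → α}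
    (hf : ∃ M, ∀ i ∈ s, f i ≤ M) : IsBoundedUnder (· ≤ ·) (l ⊓ 𝓟 s) f :=
  hf.imp fun _ hM ↦ eventually_map.2 <| eventually_inf_principal.2 <| .of_forall hM

theorem tendsto_atTop_of_isBoundedUnder_div [Field α] [LinearOrder α] [IsStrictOrderedRing α]
    {f g : ι → α} (hf : Tendsto f l atTop) (hg : ∀ᶠ i in l, 0 < g i)
    (hfg : IsBoundedUnder (· ≤ ·) l fun i ↦ f i / g i) : Tendsto g l atTop := by
  obtain ⟨M, hM⟩ := hfg.eventually_le
  have hM₁ : 0 < max M 1 := zero_lt_one.trans_le (le_max_right M 1)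
  refine tendsto_atTop_mono' l ?_ (hf.atTop_div_const hM₁)
  filter_upwards [hg, hM] with i hgi hMi
  rw [div_le_iff₀' hM₁, ← div_le_iff₀ hgi]
  exact hMi.trans (le_max_left M 1)

theorem tendsto_atTop_of_tendsto_max_atTop [LinearOrder α] [NoMaxOrder α] {a : α} {f : ι → α}
    (hf : Tendsto (fun i ↦ max a (f i)) l atTop) : Tendsto f l atTop := by
  refine hf.congr' ?_
  filter_upwards [hf.eventually_gt_atTop a] with i hi
  exact max_eq_right ((lt_max_iff.1 hi).resolve_left (lt_irrefl a)).le

end Divergence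

section AsymptoticDirection

variable {ι E F : Type*} [NormedAddCommGroup E] [NormedSpace ℝ E]
  [NormedAddCommGroup F] [NormedSpace ℝ F] {u : ι → E}

theorem exists_norm_eq_one_tendsto_normalize [ProperSpace E] {U : Ultrafilter ι}
    (hu : Tendsto (fun i ↦ ‖u i‖) U atTop) :
    ∃ p : E, ‖p‖ = 1 ∧ Tendsto (fun i ↦ normalize (u i)) U (𝓝 p) := by
  have hsphere : ∀ᶠ i in U, normalize (u i) ∈ Metric.sphere (0 : E) 1 := by
    filter_upwards [hu.eventually_gt_atTop 0] with i hi
    exact mem_sphere_zero_iff_norm.2 (NormedSpace.norm_normalize_eq_one_iff.2 (norm_pos_iff.1 hi))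
  obtain ⟨p, hp, hlim⟩ := (isCompact_sphere (0 : E) 1).ultrafilter_le_nhds'
    (U.map fun i ↦ normalize (u i)) hsphere
  exact ⟨p, mem_sphere_zero_iff_norm.1 hp, hlim⟩

theorem apply_eq_zero_of_tendsto_normalize {l : Filter ι} [l.NeBot] {T : ι → E →L[ℝ] F}
    {T₀ : E →L[ℝ] F} {p : E} (hu : Tendsto (fun i ↦ ‖u i‖) l atTop)
    (hp : Tendsto (fun i ↦ normalize (u i)) l (𝓝 p)) (hT : Tendsto T l (𝓝 T₀))
    (hTu : IsBoundedUnder (· ≤ ·) l fun i ↦ ‖T i (u i)‖) : T₀ p = 0 := by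
  have hzero : Tendsto (fun i ↦ ‖u i‖⁻¹ • T i (u i)) l (𝓝 0) :=
    hu.inv_tendsto_atTop.zero_smul_isBoundedUnder_le hTu
  have hlim : Tendsto (fun i ↦ T i (normalize (u i))) l (𝓝 (T₀ p)) :=
    (isBoundedBilinearMap_apply.continuous.tendsto (T₀, p)).comp (hT.prodMk_nhds hp)
  exact tendsto_nhds_unique hlim (hzero.congr fun i ↦ (map_smul (T i) _ _).symm)

theorem apply_eq_zero_of_isBoundedUnder_norm_sub {l : Filter ι} [l.NeBot] {T : E →L[ℝ] F}
    {p : E} {v : ι → F} {v₀ : F} (hu : Tendsto (fun i ↦ ‖u i‖) l atTop)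
    (hp : Tendsto (fun i ↦ normalize (u i)) l (𝓝 p)) (hv : Tendsto v l (𝓝 v₀))
    (hbd : IsBoundedUnder (· ≤ ·) l fun i ↦ ‖v i - T (u i)‖) : T p = 0 := by
  have hTu : (fun i ↦ T (u i)) =O[l] fun _ ↦ (1 : ℝ) := by
    simpa only [sub_sub_cancel] using
      (hv.isBigO_one ℝ).sub ((Asymptotics.isBigO_one_iff ℝ).2 hbd)
  exact apply_eq_zero_of_tendsto_normalize hu hp tendsto_const_nhds
    ((Asymptotics.isBigO_one_iff ℝ).1 hTu)

theorem mul_eq_zero_of_tendsto_normalize {R : Type*} [NonUnitalNormedRing R] [NormedSpace ℝ R]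
    [IsScalarTower ℝ R R] [SMulCommClass ℝ R R] {l : Filter ι} [l.NeBot] {w s : ι → R}
    {p s₀ : R} (hw : Tendsto (fun i ↦ ‖w i‖) l atTop)
    (hp : Tendsto (fun i ↦ normalize (w i)) l (𝓝 p)) (hs : Tendsto s l (𝓝 s₀))
    (hsw : IsBoundedUnder (· ≤ ·) l fun i ↦ ‖s i * w i‖) : s₀ * p = 0 :=
  apply_eq_zero_of_tendsto_normalize hw hp
    (((ContinuousLinearMap.mul ℝ R).continuous.tendsto s₀).comp hs) hsw

end AsymptoticDirection

theorem limit_point_degenerate_multiplier_general {ι m n : Type*} [Fintype m] [Fintype n]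
    {l : Filter ι} {g : (n → ℝ) → n → ℝ} {A : Matrix m n ℝ} {b : m → ℝ} {x : ι → n → ℝ}
    {z π : ι → m → ℝ} {φ : ι → ℝ} {xstar : n → ℝ}
    (hg : ContinuousAt g xstar) (hx : MapClusterPt xstar l x) (hz : Tendsto z l (𝓝 0))
    (hπ : ∀ᶠ k in l, 0 ≤ π k) (hφ : Tendsto φ l atTop)
    (hcompl : IsBoundedUnder (· ≤ ·) l fun k ↦ ‖(A *ᵥ x k + z k - b) * π k‖)
    (hstat : IsBoundedUnder (· ≤ ·) l fun k ↦ ‖g (x k) - Aᵀ *ᵥ π k‖)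
    (hratio : IsBoundedUnder (· ≤ ·) l fun k ↦ φ k / max 1 ‖π k‖) :
    ∃ pibar : m → ℝ, 0 ≤ pibar ∧ pibar ≠ 0 ∧ Aᵀ *ᵥ pibar = 0 ∧
      ∀ i, pibar i * (A *ᵥ xstar - b) i = 0 := by
  obtain ⟨U, hUl, hxU⟩ := mapClusterPt_iff_ultrafilter.1 hx
  have hnorm : Tendsto (fun k ↦ ‖π k‖) U atTop :=
    (tendsto_atTop_of_tendsto_max_atTop <| tendsto_atTop_of_isBoundedUnder_div hφ
      (.of_forall fun _ ↦ lt_max_of_lt_left one_pos) hratio).mono_left hUl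
  obtain ⟨p, hp_norm, hp⟩ := exists_norm_eq_one_tendsto_normalize hnorm
  have hp_nonneg : 0 ≤ p := ge_of_tendsto hp <|
    (hπ.filter_mono hUl).mono fun _ hk ↦ smul_nonneg (inv_nonneg.2 (norm_nonneg _)) hk
  have hslack : Tendsto (fun k ↦ A *ᵥ x k + z k - b) U (𝓝 (A *ᵥ xstar - b)) := by
    have hAx : Tendsto (fun k ↦ A *ᵥ x k) U (𝓝 (A *ᵥ xstar)) :=
      ((continuous_const.matrix_mulVec continuous_id).tendsto xstar).comp hxU
    simpa only [add_zero] using (hAx.add (hz.mono_left hUl)).sub_const b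
  refine ⟨p, hp_nonneg, norm_ne_zero_iff.1 (hp_norm ▸ one_ne_zero), ?_, fun i ↦ ?_⟩
  · exact apply_eq_zero_of_isBoundedUnder_norm_sub (T := Aᵀ.mulVecLin.toContinuousLinearMap)
      hnorm hp (hg.tendsto.comp hxU) (hstat.mono hUl)
  · rw [mul_comm]
    exact congrFun (mul_eq_zero_of_tendsto_normalize hnorm hp hslack (hcompl.mono hUl)) i

/-- Lemma 3.5: existence of a nonzero nonnegative π̄ with
Aᵀπ̄ = 0 complementary to the active constraints at any limit point. -/
theorem limit_point_degenerate_multiplier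
    {n m : ℕ} (H : Matrix (Fin n) (Fin n) ℝ) (hH : H.PosSemidef)
    (c : Fin n → ℝ) (A : Matrix (Fin m) (Fin n) ℝ) (b : Fin m → ℝ)
    (x : ℕ → Fin n → ℝ) (z π ξ : ℕ → Fin m → ℝ) (φ : ℕ → ℝ)
    (hφpos : ∀ k, 0 < φ k)
    (hz : ∀ k, 0 ≤ z k) (hs : ∀ k, 0 ≤ A.mulVec (x k) + z k - b)
    (hπ : ∀ k, 0 ≤ π k) (hξ : ∀ k, 0 ≤ ξ k)
    (hφ : Tendsto φ atTop atTop)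
    (K : Set ℕ) (hK : K.Infinite)
    (hbd1 : ∃ M : ℝ, ∀ k ∈ K, ‖(A.mulVec (x k) + z k - b) * π k‖ ≤ M)
    (hbd2 : ∃ M : ℝ, ∀ k ∈ K, ‖H.mulVec (x k) + c - Aᵀ.mulVec (π k)‖ ≤ M)
    (hbd3 : ∃ M : ℝ, ∀ k ∈ K, ‖π k + ξ k - fun _ => φ k‖ ≤ M)
    (hbd4 : ∃ M : ℝ, ∀ k ∈ K, φ k / max 1 ‖π k‖ ≤ M)
    (hz0 : Tendsto (fun k => z k) (atTop ⊓ Filter.principal K) (nhds 0))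
    (hxbd : ∃ M : ℝ, ∀ k ∈ K, ‖x k‖ ≤ M) :
    ∀ xstar : Fin n → ℝ,
      (∃ σ : ℕ → ℕ, StrictMono σ ∧ (∀ j, σ j ∈ K) ∧
        Tendsto (fun j => x (σ j)) atTop (nhds xstar)) →
      ∃ pibar : Fin m → ℝ, 0 ≤ pibar ∧ pibar ≠ 0 ∧
        Aᵀ.mulVec pibar = 0 ∧
        ∀ i, pibar i * (A.mulVec xstar - b) i = 0 := by
  rintro xstar ⟨σ, hσ, hσK, hx⟩
  have hσl : Tendsto σ atTop (atTop ⊓ 𝓟 K) :=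
    tendsto_inf.2 ⟨hσ.tendsto_atTop, tendsto_principal.2 (.of_forall hσK)⟩
  exact limit_point_degenerate_multiplier_general (g := fun y ↦ H *ᵥ y + c)
    (by fun_prop) (hx.mapClusterPt.of_comp hσl) hz0 (.of_forall hπ) (hφ.mono_left inf_le_left)
    (isBoundedUnder_le_inf_principal hbd1) (isBoundedUnder_le_inf_principal hbd2)
    (isBoundedUnder_le_inf_principal hbd4)
end

section
/- Let φ̂ > 0. Suppose sequences (x^k) ⊂ ℝ^n and (z^k), (π^k), (ξ^k) ⊂ ℝ^m satisfy, for all k: Ax^k + z^k ≥ b, z^k ≥ 0, π^k ≥ 0, ξ^k ≥ 0, and the sequence ((x^k, z^k)) is bounded. Suppose further that, with s^k := Ax^k + z^k − b, one has s^k ∘ π^k → 0, z^k ∘ ξ^k → 0, Hx^k + c − Aᵀπ^k → 0, π^k + ξ^k − φ̂·1 → 0, and limsup_k ‖π^k‖∞ < φ̂. Then z^k → 0, and every limit point x* of (x^k) is an optimal solution of (P). (Core of Proposition 3.1.) -/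
open Matrix Filter

/-!
Along the sequence `ξ k` is eventually bounded below by a positive constant, because
`‖π k‖ ≤ r < φhat` and `π k + ξ k` tends to `φhat • 1`; complementarity then forces `z k → 0`.
As the multipliers `π k` stay in a compact ball, at a cluster point of `x` one may also let them
converge, and the limit is a Karush–Kuhn–Tucker pair, which is optimal by convexity.
-/

section

open scoped Topology

variable {α ι κ : Type*} [Fintype ι] [Fintype κ] {n : ℕ} {l : Filter α}

/-- `IsKKTPair H c A b x p` is the Karush–Kuhn–Tucker system of the quadratic program
`min ½ xᵀHx + cᵀx` subject to `A x ≥ b`, with primal point `x` and multiplier `p`. Complementary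
slackness is encoded componentwise, by the pointwise product. -/
structure IsKKTPair (H : Matrix ι ι ℝ) (c : ι → ℝ) (A : Matrix κ ι ℝ) (b : κ → ℝ)
    (x : ι → ℝ) (p : κ → ℝ) : Prop where
  primal_feasible : b ≤ A *ᵥ x
  dual_feasible : 0 ≤ p
  stationary : H *ᵥ x + c = Aᵀ *ᵥ p
  complementary : (A *ᵥ x - b) * p = 0

theorem quadForm_add_two_mul_le_of_posSemidef {H : Matrix ι ι ℝ} (hH : H.PosSemidef)
    (x y : ι → ℝ) : x ⬝ᵥ H *ᵥ x + 2 * (H *ᵥ x ⬝ᵥ (y - x)) ≤ y ⬝ᵥ H *ᵥ y := by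
  have hnonneg : 0 ≤ (y - x) ⬝ᵥ H *ᵥ (y - x) := by
    simpa only [star_trivial] using hH.dotProduct_mulVec_nonneg (y - x)
  have hsymm : x ⬝ᵥ H *ᵥ y = H *ᵥ x ⬝ᵥ y := by
    rw [dotProduct_mulVec, ← mulVec_transpose, ← conjTranspose_eq_transpose_of_trivial,
      hH.isHermitian.eq]
  simp only [mulVec_sub, dotProduct_sub, sub_dotProduct, hsymm, dotProduct_comm _ (H *ᵥ x)]
    at hnonneg ⊢
  linarith

theorem qObj_add_gradient_le {H : Matrix (Fin n) (Fin n) ℝ} (hH : H.PosSemidef)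
    (c x y : Fin n → ℝ) : qObj H c x + (H *ᵥ x + c) ⬝ᵥ (y - x) ≤ qObj H c y := by
  have hquad := quadForm_add_two_mul_le_of_posSemidef hH x y
  simp only [qObj, add_dotProduct, dotProduct_sub] at hquad ⊢
  linarith

theorem IsKKTPair.gradient_dotProduct_nonneg {H : Matrix ι ι ℝ} {c : ι → ℝ}
    {A : Matrix κ ι ℝ} {b : κ → ℝ} {x : ι → ℝ} {p : κ → ℝ} (h : IsKKTPair H c A b x p)
    {y : ι → ℝ} (hy : b ≤ A *ᵥ y) : 0 ≤ (H *ᵥ x + c) ⬝ᵥ (y - x) := by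
  have hslack : p ⬝ᵥ (A *ᵥ x - b) = 0 := by
    rw [dotProduct_comm]
    exact Finset.sum_eq_zero fun i _ => congrFun h.complementary i
  calc
    0 ≤ p ⬝ᵥ (A *ᵥ y - b) := dotProduct_nonneg_of_nonneg h.dual_feasible (sub_nonneg.2 hy)
    _ = p ⬝ᵥ (A *ᵥ y - b) - p ⬝ᵥ (A *ᵥ x - b) := by rw [hslack, sub_zero]
    _ = p ⬝ᵥ A *ᵥ (y - x) := by rw [← dotProduct_sub, sub_sub_sub_cancel_right, mulVec_sub]
    _ = (H *ᵥ x + c) ⬝ᵥ (y - x) := by rw [h.stationary, mulVec_transpose, dotProduct_mulVec]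

theorem IsKKTPair.isMinOn_qObj {H : Matrix (Fin n) (Fin n) ℝ} {c : Fin n → ℝ}
    {A : Matrix κ (Fin n) ℝ} {b : κ → ℝ} {x : Fin n → ℝ} {p : κ → ℝ}
    (h : IsKKTPair H c A b x p) (hH : H.PosSemidef) :
    IsMinOn (qObj H c) {y | b ≤ A *ᵥ y} x := fun y hy =>
  (le_add_of_nonneg_right (h.gradient_dotProduct_nonneg hy)).trans (qObj_add_gradient_le hH c x y)

theorem tendsto_const_mulVec {R β : Type*} [NonUnitalNonAssocSemiring R] [TopologicalSpace R]
    [ContinuousAdd R] [ContinuousMul R] (B : Matrix β ι R) {u : α → ι → R} {u₀ : ι → R}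
    (hu : Tendsto u l (𝓝 u₀)) : Tendsto (fun k => B *ᵥ u k) l (𝓝 (B *ᵥ u₀)) :=
  ((continuous_const.matrix_mulVec continuous_id).tendsto u₀).comp hu

theorem IsKKTPair.of_tendsto [l.NeBot] {H : Matrix ι ι ℝ} {c : ι → ℝ} {A : Matrix κ ι ℝ}
    {b : κ → ℝ} {x : α → ι → ℝ} {z p : α → κ → ℝ} {x₀ : ι → ℝ} {p₀ : κ → ℝ}
    (hx : Tendsto x l (𝓝 x₀)) (hz : Tendsto z l (𝓝 0)) (hp : Tendsto p l (𝓝 p₀))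
    (hfeas : ∀ᶠ k in l, b ≤ A *ᵥ x k + z k) (hp_nonneg : ∀ᶠ k in l, 0 ≤ p k)
    (hstat : Tendsto (fun k => H *ᵥ x k + c - Aᵀ *ᵥ p k) l (𝓝 0))
    (hcomp : Tendsto (fun k => (A *ᵥ x k + z k - b) * p k) l (𝓝 0)) :
    IsKKTPair H c A b x₀ p₀ := by
  have hAxz : Tendsto (fun k => A *ᵥ x k + z k) l (𝓝 (A *ᵥ x₀)) := by
    simpa only [add_zero] using (tendsto_const_mulVec A hx).add hz
  exact
    { primal_feasible := ge_of_tendsto hAxz hfeas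
      dual_feasible := ge_of_tendsto hp hp_nonneg
      stationary := sub_eq_zero.1 <| tendsto_nhds_unique
        (((tendsto_const_mulVec H hx).add_const c).sub (tendsto_const_mulVec Aᵀ hp)) hstat
      complementary := tendsto_nhds_unique ((hAxz.sub_const b).mul hp) hcomp }

theorem exists_isKKTPair_of_mapClusterPt {H : Matrix ι ι ℝ} {c : ι → ℝ} {A : Matrix κ ι ℝ}
    {b : κ → ℝ} {x : α → ι → ℝ} {z p : α → κ → ℝ} {x₀ : ι → ℝ} {r : ℝ}
    (hx : MapClusterPt x₀ l x) (hz : Tendsto z l (𝓝 0)) (hp_bdd : ∀ᶠ k in l, ‖p k‖ ≤ r)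
    (hfeas : ∀ᶠ k in l, b ≤ A *ᵥ x k + z k) (hp_nonneg : ∀ᶠ k in l, 0 ≤ p k)
    (hstat : Tendsto (fun k => H *ᵥ x k + c - Aᵀ *ᵥ p k) l (𝓝 0))
    (hcomp : Tendsto (fun k => (A *ᵥ x k + z k - b) * p k) l (𝓝 0)) :
    ∃ p₀, IsKKTPair H c A b x₀ p₀ := by
  obtain ⟨U, hUl, hxU⟩ := mapClusterPt_iff_ultrafilter.1 hx
  have hp_ball : ∀ᶠ k in U, p k ∈ Metric.closedBall 0 r :=
    (hp_bdd.filter_mono hUl).mono fun _ => mem_closedBall_zero_iff.2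
  obtain ⟨p₀, -, hpU⟩ := (isCompact_closedBall 0 r).ultrafilter_le_nhds' (U.map p) hp_ball
  exact ⟨p₀, .of_tendsto hxU (hz.mono_left hUl) hpU (hfeas.filter_mono hUl)
    (hp_nonneg.filter_mono hUl) (hstat.mono_left hUl) (hcomp.mono_left hUl)⟩

theorem tendsto_zero_of_tendsto_mul_zero_of_le_norm {R : Type*} [NormedRing R] [NormMulClass R]
    {f g : α → R} {δ : ℝ} (hδ : 0 < δ) (hg : ∀ᶠ k in l, δ ≤ ‖g k‖)
    (hfg : Tendsto (fun k => f k * g k) l (𝓝 0)) : Tendsto f l (𝓝 0) := by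
  have hquot : Tendsto (fun k => ‖f k * g k‖ / δ) l (𝓝 0) := by
    simpa only [norm_zero, zero_div] using hfg.norm.div_const δ
  refine squeeze_zero_norm' (hg.mono fun k hk => ?_) hquot
  rw [le_div_iff₀ hδ, norm_mul]
  gcongr

theorem tendsto_zero_of_penalty_gt {φ r : ℝ} {z p q : α → κ → ℝ} (hr : r < φ)
    (hp_bdd : ∀ᶠ k in l, ‖p k‖ ≤ r)
    (hsum : Tendsto (fun k => p k + q k - fun _ => φ) l (𝓝 0))
    (hcomp : Tendsto (fun k => z k * q k) l (𝓝 0)) : Tendsto z l (𝓝 0) := by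
  rw [tendsto_pi_nhds] at hsum hcomp ⊢
  intro i
  have hgap : 0 < (φ - r) / 2 := half_pos (sub_pos.2 hr)
  refine tendsto_zero_of_tendsto_mul_zero_of_le_norm hgap ?_ (hcomp i)
  have hsum_gt : ∀ᶠ k in l, -((φ - r) / 2) < p k i + q k i - φ :=
    (hsum i).eventually_const_lt (neg_lt_zero.2 hgap)
  filter_upwards [hsum_gt, hp_bdd] with k hk hpk
  have hpi : p k i ≤ r := (Real.le_norm_self _).trans ((norm_le_pi_norm (p k) i).trans hpk)
  exact le_trans (by linarith) (Real.le_norm_self (q k i))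

theorem convergence_for_constant_penalty_general
    {H : Matrix (Fin n) (Fin n) ℝ} (hH : H.PosSemidef) {c : Fin n → ℝ}
    {A : Matrix κ (Fin n) ℝ} {b : κ → ℝ} {φhat r : ℝ} {x : α → Fin n → ℝ} {z π ξ : α → κ → ℝ}
    (hfeas : ∀ᶠ k in l, b ≤ A *ᵥ x k + z k) (hπ : ∀ᶠ k in l, 0 ≤ π k)
    (hcomp1 : Tendsto (fun k => (A *ᵥ x k + z k - b) * π k) l (𝓝 0))
    (hcomp2 : Tendsto (fun k => z k * ξ k) l (𝓝 0))
    (hstat : Tendsto (fun k => H *ᵥ x k + c - Aᵀ *ᵥ π k) l (𝓝 0))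
    (hsum : Tendsto (fun k => π k + ξ k - fun _ => φhat) l (𝓝 0))
    (hr : r < φhat) (hπ_bdd : ∀ᶠ k in l, ‖π k‖ ≤ r) :
    Tendsto z l (𝓝 0) ∧ ∀ xstar, MapClusterPt xstar l x →
      b ≤ A *ᵥ xstar ∧ IsMinOn (qObj H c) {x' | b ≤ A *ᵥ x'} xstar := by
  have hz : Tendsto z l (𝓝 0) := tendsto_zero_of_penalty_gt hr hπ_bdd hsum hcomp2
  refine ⟨hz, fun xstar hx => ?_⟩
  obtain ⟨_, hKKT⟩ := exists_isKKTPair_of_mapClusterPt hx hz hπ_bdd hfeas hπ hstat hcomp1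
  exact ⟨hKKT.primal_feasible, hKKT.isMinOn_qObj hH⟩

end

/-- core of Proposition 3.1: with penalty parameter eventually
exceeding limsup ‖π^k‖∞, z^k → 0 and every limit point of (x^k) solves (P). -/
theorem convergence_for_constant_penalty
    {n m : ℕ} (H : Matrix (Fin n) (Fin n) ℝ) (hH : H.PosSemidef)
    (c : Fin n → ℝ) (A : Matrix (Fin m) (Fin n) ℝ) (b : Fin m → ℝ)
    (φhat : ℝ) (hφhat : 0 < φhat)
    (x : ℕ → Fin n → ℝ) (z π ξ : ℕ → Fin m → ℝ)
    (hfeas : ∀ k, b ≤ A.mulVec (x k) + z k) (hz : ∀ k, 0 ≤ z k)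
    (hπ : ∀ k, 0 ≤ π k) (hξ : ∀ k, 0 ≤ ξ k)
    (hbd : ∃ M : ℝ, ∀ k, ‖x k‖ ≤ M ∧ ‖z k‖ ≤ M)
    (hcomp1 : Tendsto (fun k => (A.mulVec (x k) + z k - b) * π k) atTop (nhds 0))
    (hcomp2 : Tendsto (fun k => z k * ξ k) atTop (nhds 0))
    (hstat : Tendsto (fun k => H.mulVec (x k) + c - Aᵀ.mulVec (π k)) atTop (nhds 0))
    (hsum : Tendsto (fun k => π k + ξ k - fun _ => φhat) atTop (nhds 0))
    (hlimsup : ∃ r : ℝ, r < φhat ∧ ∀ᶠ k in atTop, ‖π k‖ ≤ r) :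
    Tendsto (fun k => z k) atTop (nhds 0) ∧
    ∀ xstar : Fin n → ℝ,
      (∃ σ : ℕ → ℕ, StrictMono σ ∧ Tendsto (fun j => x (σ j)) atTop (nhds xstar)) →
      b ≤ A.mulVec xstar ∧
        ∀ x' : Fin n → ℝ, b ≤ A.mulVec x' → qObj H c xstar ≤ qObj H c x' := by
  obtain ⟨r, hr, hπ_bdd⟩ := hlimsup
  obtain ⟨hz_lim, hopt⟩ := convergence_for_constant_penalty_general hH (.of_forall hfeas)
    (.of_forall hπ) hcomp1 hcomp2 hstat hsum hr hπ_bdd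
  exact ⟨hz_lim, fun xstar ⟨_, hσ, hx⟩ =>
    hopt xstar (.of_comp hσ.tendsto_atTop hx.mapClusterPt)⟩
end

section
/- Suppose there exists a dual-feasible quadruple (x̂, π̂, η̂, ζ̂). Let sequences (x^k) ⊂ ℝ^n, (z^k) ⊂ ℝ^m, (y^k) ⊂ ℝ^p and a positive nondecreasing scalar sequence (φ_k) satisfy: (x^k, z^k, y^k) is feasible for (P̃_{φ_k}) for all k; f(x^k) + φ_k·(1ᵀz^k + 1ᵀy^k) ≤ f(x^{k−1}) + φ_k·(1ᵀz^{k−1} + 1ᵀy^{k−1}) for all k ≥ 1; and, if the sequence ((z^k, y^k)) is unbounded, then φ_k → ∞. Then the sequence ((z^k, y^k)) is bounded. (Lemma 4.4.) -/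
open Matrix Filter

/-!
Stationarity at `x̂` together with convexity makes the Lagrangian bounded below. On the feasible set
of the penalized problem, with total violation `s = 1ᵀz + 1ᵀy`, this gives `K ≤ f x + L * s`, where
`L = max ‖π̂‖ ‖η̂ - ζ̂‖` is the exact-penalty threshold. As soon as `φ k > L`, the descent condition
makes `s k + (f (x k) + L * s k - K) / (φ k - L)` nonincreasing: the step itself decreases it at the
fixed weight `φ (k + 1) - L`, and increasing the weight only shrinks the nonnegative quotient.
-/

section PenalizedDescent

variable {𝕜 : Type*} [Field 𝕜] [LinearOrder 𝕜] [IsStrictOrderedRing 𝕜] {s : ℕ → 𝕜}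

theorem antitoneOn_add_div_of_weighted_descent {g w : ℕ → 𝕜} {N : ℕ} (hg : ∀ k, 0 ≤ g k)
    (hw : Monotone w) (hN : 0 < w N)
    (hdesc : ∀ k, g (k + 1) + w (k + 1) * s (k + 1) ≤ g k + w (k + 1) * s k) :
    AntitoneOn (fun k => s k + g k / w k) {k | N ≤ k} := by
  refine antitoneOn_nat_Ici_of_succ_le fun k hk => ?_
  have hwk : 0 < w k := hN.trans_le (hw hk)
  have hwk' : 0 < w (k + 1) := hwk.trans_le (hw k.le_succ)
  have hmul (t r : 𝕜) : t + r / w (k + 1) = (r + w (k + 1) * t) / w (k + 1) := by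
    field_simp
    ring
  calc s (k + 1) + g (k + 1) / w (k + 1)
      ≤ s k + g k / w (k + 1) := by
        rw [hmul, hmul]
        exact div_le_div_of_nonneg_right (hdesc k) hwk'.le
    _ ≤ s k + g k / w k :=
        add_le_add_right (div_le_div_of_nonneg_left (hg k) hwk (hw k.le_succ)) _

theorem bddAbove_range_of_penalized_descent {F φ : ℕ → 𝕜} {K L : 𝕜} {N : ℕ}
    (hF : ∀ k, K ≤ F k + L * s k) (hφ : Monotone φ) (hN : L < φ N)
    (hdesc : ∀ k, F (k + 1) + φ (k + 1) * s (k + 1) ≤ F k + φ (k + 1) * s k) :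
    BddAbove (Set.range s) := by
  let g k := F k + L * s k - K
  let w k := φ k - L
  have hg (k : ℕ) : 0 ≤ g k := sub_nonneg.mpr (hF k)
  have hw : Monotone w := fun _ _ hij => sub_le_sub_right (hφ hij) L
  have hwN : 0 < w N := sub_pos.mpr hN
  have hanti : AntitoneOn (fun k => s k + g k / w k) {k | N ≤ k} :=
    antitoneOn_add_div_of_weighted_descent hg hw hwN fun k => by
      dsimp only [g, w]
      linarith [hdesc k]
  refine (isBoundedUnder_of_eventually_le (a := s N + g N / w N) ?_).bddAbove_range
  filter_upwards [eventually_ge_atTop N] with k hk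
  have hquot : 0 ≤ g k / w k := div_nonneg (hg k) (hwN.trans_le (hw hk)).le
  exact (le_add_of_nonneg_right hquot).trans (hanti (Set.mem_ofPred.mpr le_rfl) hk hk)

end PenalizedDescent

section FiniteSums

variable {ι : Type*} [Fintype ι]

theorem dotProduct_le_norm_mul_sum_of_abs_le {u v w : ι → ℝ} (hvw : |v| ≤ w) :
    u ⬝ᵥ v ≤ ‖u‖ * ∑ i, w i := by
  rw [dotProduct, Finset.mul_sum]
  refine Finset.sum_le_sum fun i _ => (le_abs_self _).trans ?_
  rw [abs_mul]
  exact mul_le_mul (norm_le_pi_norm u i) (hvw i) (abs_nonneg _) (norm_nonneg u)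

end FiniteSums

section Lagrangian

variable {X ι κ : Type*} [Fintype ι] [Fintype κ]

/-- The Lagrangian of the problem of minimizing `f` subject to `b ≤ g x` and `h x = d`, used as a
lower model of the penalized objective. The multiplier `v` of the equality constraint has no sign;
it stands for the difference `η - ζ` of the multipliers of the two inequalities encoding it. -/
def lagrangian (f : X → ℝ) (g : X → ι → ℝ) (b : ι → ℝ) (h : X → κ → ℝ) (d : κ → ℝ)
    (u : ι → ℝ) (v : κ → ℝ) (x : X) : ℝ :=
  f x - u ⬝ᵥ (g x - b) - v ⬝ᵥ (h x - d)

theorem lagrangian_le_add_mul_violation {f : X → ℝ} {g : X → ι → ℝ} {b : ι → ℝ}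
    {h : X → κ → ℝ} {d : κ → ℝ} {u : ι → ℝ} {v : κ → ℝ} {x : X} {z : ι → ℝ} {y : κ → ℝ}
    (hu : 0 ≤ u) (hz : 0 ≤ z) (hg : b ≤ g x + z) (hh : |h x - d| ≤ y) :
    lagrangian f g b h d u v x ≤ f x + max ‖u‖ ‖v‖ * (∑ i, z i + ∑ j, y j) := by
  have hineq : -(u ⬝ᵥ (g x - b)) ≤ max ‖u‖ ‖v‖ * ∑ i, z i :=
    calc -(u ⬝ᵥ (g x - b)) = u ⬝ᵥ (b - g x) := by rw [← dotProduct_neg, neg_sub]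
      _ ≤ u ⬝ᵥ z := dotProduct_le_dotProduct_of_nonneg_left (sub_le_iff_le_add'.mpr hg) hu
      _ ≤ ‖u‖ * ∑ i, z i := dotProduct_le_norm_mul_sum_of_abs_le (abs_of_nonneg hz).le
      _ ≤ max ‖u‖ ‖v‖ * ∑ i, z i :=
        mul_le_mul_of_nonneg_right (le_max_left _ _) (Finset.sum_nonneg fun i _ => hz i)
  have heq : -(v ⬝ᵥ (h x - d)) ≤ max ‖u‖ ‖v‖ * ∑ j, y j :=
    calc -(v ⬝ᵥ (h x - d)) = v ⬝ᵥ (d - h x) := by rw [← dotProduct_neg, neg_sub]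
      _ ≤ ‖v‖ * ∑ j, y j := dotProduct_le_norm_mul_sum_of_abs_le (by rwa [abs_sub_comm])
      _ ≤ max ‖u‖ ‖v‖ * ∑ j, y j :=
        mul_le_mul_of_nonneg_right (le_max_right _ _)
          (Finset.sum_nonneg fun j _ => (abs_nonneg _).trans (hh j))
  rw [lagrangian]
  linarith

end Lagrangian

section Quadratic

theorem two_mul_dotProduct_mulVec_le_of_posSemidef {σ : Type*} [Fintype σ] {H : Matrix σ σ ℝ}
    (hH : H.PosSemidef) (x w : σ → ℝ) :
    2 * (x ⬝ᵥ H *ᵥ w) ≤ x ⬝ᵥ H *ᵥ x + w ⬝ᵥ H *ᵥ w := by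
  have hT : Hᵀ = H := by simpa only [conjTranspose_eq_transpose_of_trivial] using hH.isHermitian.eq
  have hsymm : w ⬝ᵥ H *ᵥ x = x ⬝ᵥ H *ᵥ w := by rw [← dotProduct_transpose_mulVec, hT]
  have hnonneg : 0 ≤ (x - w) ⬝ᵥ H *ᵥ (x - w) := hH.dotProduct_mulVec_nonneg (x - w)
  rw [mulVec_sub, sub_dotProduct, dotProduct_sub, dotProduct_sub, hsymm] at hnonneg
  linarith

variable {n : ℕ} {ι κ : Type*} [Fintype ι] [Fintype κ] {H : Matrix (Fin n) (Fin n) ℝ}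
  {c xhat : Fin n → ℝ} {A : Matrix ι (Fin n) ℝ} {C : Matrix κ (Fin n) ℝ} {u : ι → ℝ} {v : κ → ℝ}

theorem wolfe_dual_objective_le_lagrangian_qObj (hH : H.PosSemidef)
    (hstat : H *ᵥ xhat + c - Aᵀ *ᵥ u - Cᵀ *ᵥ v = 0) (b : ι → ℝ) (d : κ → ℝ) (x : Fin n → ℝ) :
    -(1 / 2) * (xhat ⬝ᵥ H *ᵥ xhat) + u ⬝ᵥ b + v ⬝ᵥ d ≤
      lagrangian (qObj H c) (A *ᵥ ·) b (C *ᵥ ·) d u v x := by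
  have hstat_x : x ⬝ᵥ H *ᵥ xhat + c ⬝ᵥ x - u ⬝ᵥ A *ᵥ x - v ⬝ᵥ C *ᵥ x = 0 := by
    simpa only [dotProduct_sub, dotProduct_add, dotProduct_transpose_mulVec, dotProduct_comm x c,
      dotProduct_zero] using congrArg (x ⬝ᵥ ·) hstat
  have hconvex := two_mul_dotProduct_mulVec_le_of_posSemidef hH x xhat
  simp only [lagrangian, qObj, dotProduct_sub]
  linarith

theorem bddBelow_range_lagrangian_qObj (hH : H.PosSemidef)
    (hstat : H *ᵥ xhat + c - Aᵀ *ᵥ u - Cᵀ *ᵥ v = 0) (b : ι → ℝ) (d : κ → ℝ) :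
    BddBelow (Set.range (lagrangian (qObj H c) (A *ᵥ ·) b (C *ᵥ ·) d u v)) :=
  ⟨_, Set.forall_mem_range.mpr (wolfe_dual_objective_le_lagrangian_qObj hH hstat b d)⟩

end Quadratic

theorem relaxation_sequence_bounded_with_equalities_general
    {X ι κ : Type*} [Fintype ι] [Fintype κ] {f : X → ℝ} {g : X → ι → ℝ} {b : ι → ℝ}
    {h : X → κ → ℝ} {d : κ → ℝ} {u : ι → ℝ} {v : κ → ℝ}
    (hL : BddBelow (Set.range (lagrangian f g b h d u v))) (hu : 0 ≤ u)
    {x : ℕ → X} {z : ℕ → ι → ℝ} {y : ℕ → κ → ℝ} {φ : ℕ → ℝ} {N : ℕ}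
    (hφmono : Monotone φ) (hφ : max ‖u‖ ‖v‖ < φ N)
    (hfeas1 : ∀ k, b ≤ g (x k) + z k) (hz : ∀ k, 0 ≤ z k)
    (hfeas2 : ∀ k, d ≤ h (x k) + y k) (hfeas3 : ∀ k, -d ≤ -h (x k) + y k)
    (hdesc : ∀ k : ℕ,
      f (x (k + 1)) + φ (k + 1) * ((∑ i, z (k + 1) i) + ∑ j, y (k + 1) j) ≤
      f (x k) + φ (k + 1) * ((∑ i, z k i) + ∑ j, y k j)) :
    ∃ M : ℝ, ∀ k, max ‖z k‖ ‖y k‖ ≤ M := by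
  obtain ⟨K, hK⟩ := hL
  have habs (k : ℕ) : |h (x k) - d| ≤ y k :=
    abs_le'.mpr ⟨(sub_eq_add_neg _ _).trans_le (le_neg_add_iff_add_le.mp (hfeas3 k)),
      (neg_sub _ _).trans_le (sub_le_iff_le_add'.mpr (hfeas2 k))⟩
  have hy (k : ℕ) : 0 ≤ y k := (abs_nonneg _).trans (habs k)
  obtain ⟨M, hM⟩ := bddAbove_range_of_penalized_descent
    (fun k => (hK (Set.mem_range_self (x k))).trans
      (lagrangian_le_add_mul_violation hu (hz k) (hfeas1 k) (habs k)))
    hφmono hφ hdesc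
  refine ⟨M, fun k => le_trans ?_ (hM (Set.mem_range_self k))⟩
  calc max ‖z k‖ ‖y k‖ ≤ ‖z k‖ + ‖y k‖ := max_le_add_of_nonneg (norm_nonneg _) (norm_nonneg _)
    _ ≤ ∑ i, z k i + ∑ j, y k j :=
      add_le_add (pi_norm_le_sum_of_nonneg (hz k)) (pi_norm_le_sum_of_nonneg (hy k))

/-- Lemma 4.4: the sequence ((z^k, y^k)) is bounded. -/
theorem relaxation_sequence_bounded_with_equalities
    {n m p : ℕ} (H : Matrix (Fin n) (Fin n) ℝ) (hH : H.PosSemidef)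
    (c : Fin n → ℝ) (A : Matrix (Fin m) (Fin n) ℝ) (b : Fin m → ℝ)
    (C : Matrix (Fin p) (Fin n) ℝ) (d : Fin p → ℝ)
    (xhat : Fin n → ℝ) (pihat : Fin m → ℝ) (etahat zetahat : Fin p → ℝ)
    (hdeq : H.mulVec xhat + c - Aᵀ.mulVec pihat
      - Cᵀ.mulVec (etahat - zetahat) = 0)
    (hpi : 0 ≤ pihat) (heta : 0 ≤ etahat) (hzeta : 0 ≤ zetahat)
    (x : ℕ → Fin n → ℝ) (z : ℕ → Fin m → ℝ) (y : ℕ → Fin p → ℝ) (φ : ℕ → ℝ)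
    (hφpos : ∀ k, 0 < φ k) (hφmono : Monotone φ)
    (hfeas1 : ∀ k, b ≤ A.mulVec (x k) + z k) (hz : ∀ k, 0 ≤ z k)
    (hfeas2 : ∀ k, d ≤ C.mulVec (x k) + y k)
    (hfeas3 : ∀ k, -d ≤ -C.mulVec (x k) + y k)
    (hdesc : ∀ k : ℕ,
      qObj H c (x (k + 1)) + φ (k + 1) * ((∑ i, z (k + 1) i) + ∑ j, y (k + 1) j) ≤
      qObj H c (x k) + φ (k + 1) * ((∑ i, z k i) + ∑ j, y k j))
    (hunb : (¬ ∃ M : ℝ, ∀ k, max ‖z k‖ ‖y k‖ ≤ M) → Tendsto φ atTop atTop) :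
    ∃ M : ℝ, ∀ k, max ‖z k‖ ‖y k‖ ≤ M := by
  by_contra hbdd
  obtain ⟨N, hN⟩ := ((hunb hbdd).eventually_gt_atTop (max ‖pihat‖ ‖etahat - zetahat‖)).exists
  exact hbdd (relaxation_sequence_bounded_with_equalities_general
    (bddBelow_range_lagrangian_qObj hH hdeq b d) hpi hφmono hN hfeas1 hz hfeas2 hfeas3 hdesc)
end

section
/- Let sequences (x^k) ⊂ ℝ^n, (z^k), (π^k), (ξ^k) ⊂ ℝ^m, (y^k), (η^k), (ζ^k) ⊂ ℝ^p and scalars φ_k > 0 satisfy, for all k: z^k ≥ 0, s^k := Ax^k + z^k − b ≥ 0, π^k, ξ^k, η^k, ζ^k ≥ 0, and φ_k → ∞. Suppose K ⊆ ℕ is an infinite index set such that for k ∈ K the sequences (s^k ∘ π^k), (Hx^k + c − Aᵀπ^k − Cᵀ(η^k − ζ^k)), (π^k + ξ^k − φ_k·1), (η^k + ζ^k − φ_k·1), and (φ_k / max{1, ‖(π^k, η^k − ζ^k)‖∞}) are bounded, z^k → 0 and y^k → 0 along K, and (x^k)_{k∈K} is bounded. Then for every limit point x* of (x^k)_{k∈K}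 there exist π̄ ∈ ℝ^m and ω̄ ∈ ℝ^p with π̄ ≥ 0, (π̄, ω̄) ≠ (0, 0), Aᵀπ̄ + Cᵀω̄ = 0, and π̄ᵢ·(Ax* − b)ᵢ = 0 for every i. (Lemma 4.6.) -/
open Matrix Filter

/-!
The hypothesis on `φ k / max 1 ‖(π k, η k - ζ k)‖` forces the multipliers to blow up. Dividing them
by their norm, which tends to infinity, turns every bounded residual into a null sequence, so a
limit of the normalized multipliers is a unit vector for which stationarity and complementarity hold
exactly; the objective gradient, being bounded, disappears from stationarity.
-/

open scoped Topology

section Boundedness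

variable {ι : Type*} {l : Filter ι}

theorem isBoundedUnder_inf_principal {α : Type*} [Preorder α] {u : ι → α} {s : Set ι}
    (h : ∃ M, ∀ k ∈ s, u k ≤ M) : IsBoundedUnder (· ≤ ·) (l ⊓ 𝓟 s) u :=
  let ⟨_, hM⟩ := h
  isBoundedUnder_of_eventually_le (eventually_inf_principal.2 (.of_forall hM))

theorem tendsto_atTop_of_isBoundedUnder_div_max_one {f g : ι → ℝ} (hf : Tendsto f l atTop)
    (hfg : IsBoundedUnder (· ≤ ·) l fun k => f k / max 1 (g k)) : Tendsto g l atTop := by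
  obtain ⟨M, hM⟩ := hfg.eventually_le
  refine tendsto_atTop.2 fun B => ?_
  filter_upwards [hM, hf.eventually_gt_atTop (max 0 M * max 1 B)] with k hle hgt
  by_contra! hlt
  refine hgt.not_ge ?_
  calc
    f k ≤ M * max 1 (g k) := (div_le_iff₀ (by positivity)).1 hle
    _ ≤ max 0 M * max 1 B := by gcongr; exact le_max_right 0 M

end Boundedness

section Normalization

theorem exists_norm_eq_one_tendsto_inv_norm_smul {ι E : Type*} [NormedAddCommGroup E]
    [NormedSpace ℝ E] [ProperSpace E] {U : Ultrafilter ι} {u : ι → E}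
    (hu : Tendsto (fun k => ‖u k‖) U atTop) :
    ∃ w : E, ‖w‖ = 1 ∧ Tendsto (fun k => ‖u k‖⁻¹ • u k) U (𝓝 w) := by
  have hsphere : ∀ᶠ k in U, ‖u k‖⁻¹ • u k ∈ Metric.sphere (0 : E) 1 := by
    filter_upwards [hu.eventually_gt_atTop 0] with k hk
    simpa using norm_smul_inv_norm (𝕜 := ℝ) (norm_pos_iff.1 hk)
  obtain ⟨w, hw, hlim⟩ := (isCompact_sphere (0 : E) 1).ultrafilter_le_nhds'
    (U.map fun k => ‖u k‖⁻¹ • u k) hsphere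
  exact ⟨w, mem_sphere_zero_iff_norm.1 hw, hlim⟩

variable {ι 𝕜 E F : Type*} [NormedField 𝕜] [NormedAddCommGroup E] [NormedSpace 𝕜 E]
  {l : Filter ι} [l.NeBot] {r : ι → 𝕜}

theorem eq_zero_of_tendsto_smul_of_isBoundedUnder {u : ι → E} {w : E} (hr : Tendsto r l (𝓝 0))
    (hu : IsBoundedUnder (· ≤ ·) l fun k => ‖u k‖) (hw : Tendsto (fun k => r k • u k) l (𝓝 w)) :
    w = 0 :=
  tendsto_nhds_unique hw (hr.zero_smul_isBoundedUnder_le hu)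

theorem map_eq_zero_of_tendsto_smul_of_isBoundedUnder [NormedAddCommGroup F] [NormedSpace 𝕜 F]
    (L : E →L[𝕜] F) {u : ι → E} {w : E} (hr : Tendsto r l (𝓝 0))
    (hw : Tendsto (fun k => r k • u k) l (𝓝 w))
    (hLu : IsBoundedUnder (· ≤ ·) l fun k => ‖L (u k)‖) : L w = 0 :=
  eq_zero_of_tendsto_smul_of_isBoundedUnder hr hLu <| by
    simpa only [Function.comp_def, map_smul] using (L.continuous.tendsto w).comp hw

theorem mul_eq_zero_of_tendsto_smul_of_isBoundedUnder {R : Type*} [NonUnitalNormedRing R]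
    [NormedSpace 𝕜 R] [SMulCommClass 𝕜 R R] {s t : ι → R} {a b : R} (hr : Tendsto r l (𝓝 0))
    (hs : Tendsto s l (𝓝 a)) (ht : Tendsto (fun k => r k • t k) l (𝓝 b))
    (hst : IsBoundedUnder (· ≤ ·) l fun k => ‖s k * t k‖) : a * b = 0 :=
  eq_zero_of_tendsto_smul_of_isBoundedUnder hr hst <| by
    simpa only [mul_smul_comm] using hs.mul ht

end Normalization

section Multipliers

variable {ι m n p : Type*} [Fintype m] [Fintype n] [Fintype p] {l : Filter ι} [l.NeBot]
  {r : ι → ℝ} {x : ι → n → ℝ} {xstar : n → ℝ} {π : ι → m → ℝ} {πbar : m → ℝ}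

theorem mulVec_transpose_add_eq_zero_of_isBoundedUnder (A : Matrix m n ℝ) (C : Matrix p n ℝ)
    {v : ι → n → ℝ} {ω : ι → p → ℝ} {ωbar : p → ℝ} (hr : Tendsto r l (𝓝 0))
    (hlim : Tendsto (fun k => r k • (π k, ω k)) l (𝓝 (πbar, ωbar)))
    (hv : IsBoundedUnder (· ≤ ·) l fun k => ‖v k‖)
    (hres : IsBoundedUnder (· ≤ ·) l fun k => ‖v k - Aᵀ *ᵥ π k - Cᵀ *ᵥ ω k‖) :
    Aᵀ *ᵥ πbar + Cᵀ *ᵥ ωbar = 0 := by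
  let L := (Aᵀ.mulVecLin.coprod Cᵀ.mulVecLin).toContinuousLinearMap
  have hL : IsBoundedUnder (· ≤ ·) l fun k => ‖L (π k, ω k)‖ := by
    rw [← Asymptotics.isBigO_one_iff ℝ] at hv hres ⊢
    refine (hv.sub hres).congr_left fun k => ?_
    simp only [L, LinearMap.coe_toContinuousLinearMap', LinearMap.coprod_apply, mulVecLin_apply]
    abel
  exact map_eq_zero_of_tendsto_smul_of_isBoundedUnder L hr hlim hL

theorem mul_mulVec_sub_eq_zero_of_isBoundedUnder (A : Matrix m n ℝ) (b : m → ℝ) {z : ι → m → ℝ}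
    (hr : Tendsto r l (𝓝 0)) (hlim : Tendsto (fun k => r k • π k) l (𝓝 πbar))
    (hx : Tendsto x l (𝓝 xstar)) (hz : Tendsto z l (𝓝 0))
    (hcompl : IsBoundedUnder (· ≤ ·) l fun k => ‖(A *ᵥ x k + z k - b) * π k‖) :
    πbar * (A *ᵥ xstar - b) = 0 := by
  have hslack : Tendsto (fun k => A *ᵥ x k + z k - b) l (𝓝 (A *ᵥ xstar - b)) := by
    have hA : Continuous fun v => A *ᵥ v := by fun_prop
    simpa only [Function.comp_def, add_zero] using
      (((hA.tendsto xstar).comp hx).add hz).sub_const b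
  rw [mul_comm]
  exact mul_eq_zero_of_tendsto_smul_of_isBoundedUnder hr hslack hlim hcompl

end Multipliers

theorem limit_point_degenerate_multiplier_with_equalities_general
    {ι m n p : Type*} [Fintype m] [Fintype n] [Fintype p] {l : Filter ι}
    (A : Matrix m n ℝ) (b : m → ℝ) (C : Matrix p n ℝ) (g : (n → ℝ) → n → ℝ)
    {x : ι → n → ℝ} {z π : ι → m → ℝ} {ω : ι → p → ℝ} {xstar : n → ℝ}
    (hx : MapClusterPt xstar l x) (hg : ContinuousAt g xstar) (hz : Tendsto z l (𝓝 0))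
    (hπ : ∀ᶠ k in l, 0 ≤ π k)
    (hcompl : IsBoundedUnder (· ≤ ·) l fun k => ‖(A *ᵥ x k + z k - b) * π k‖)
    (hstat : IsBoundedUnder (· ≤ ·) l fun k => ‖g (x k) - Aᵀ *ᵥ π k - Cᵀ *ᵥ ω k‖)
    (hunbdd : Tendsto (fun k => ‖(π k, ω k)‖) l atTop) :
    ∃ (πbar : m → ℝ) (ωbar : p → ℝ), 0 ≤ πbar ∧ (πbar, ωbar) ≠ (0, 0) ∧
      Aᵀ *ᵥ πbar + Cᵀ *ᵥ ωbar = 0 ∧ ∀ i, πbar i * (A *ᵥ xstar - b) i = 0 := by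
  obtain ⟨U, hU, hxU⟩ := mapClusterPt_iff_ultrafilter.1 hx
  have hnorm := hunbdd.mono_left hU
  obtain ⟨⟨πbar, ωbar⟩, hunit, hlim⟩ := exists_norm_eq_one_tendsto_inv_norm_smul hnorm
  have hinv : Tendsto (fun k => ‖(π k, ω k)‖⁻¹) U (𝓝 0) := hnorm.inv_tendsto_atTop
  have hlimπ : Tendsto (fun k => ‖(π k, ω k)‖⁻¹ • π k) U (𝓝 πbar) := hlim.fst_nhds
  have hgrad : IsBoundedUnder (· ≤ ·) U fun k => ‖g (x k)‖ :=
    (hg.tendsto.comp hxU).norm.isBoundedUnder_le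
  refine ⟨πbar, ωbar, ?nonneg, ?ne_zero, ?stationary, ?complementary⟩
  case nonneg =>
    exact ge_of_tendsto hlimπ ((hπ.filter_mono hU).mono fun k hk => smul_nonneg (by positivity) hk)
  case ne_zero => exact norm_ne_zero_iff.1 (hunit ▸ one_ne_zero)
  case stationary =>
    exact mulVec_transpose_add_eq_zero_of_isBoundedUnder A C hinv hlim hgrad (hstat.mono hU)
  case complementary =>
    exact congrFun (mul_mulVec_sub_eq_zero_of_isBoundedUnder A b hinv hlimπ hxU
      (hz.mono_left hU) (hcompl.mono hU))

/-- Lemma 4.6: existence of a nonzero multiplier pair (π̄, ω̄)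
with Aᵀπ̄ + Cᵀω̄ = 0 complementary to the active inequality constraints at any
limit point. -/
theorem limit_point_degenerate_multiplier_with_equalities
    {n m p : ℕ} (H : Matrix (Fin n) (Fin n) ℝ) (hH : H.PosSemidef)
    (c : Fin n → ℝ) (A : Matrix (Fin m) (Fin n) ℝ) (b : Fin m → ℝ)
    (C : Matrix (Fin p) (Fin n) ℝ) (d : Fin p → ℝ)
    (x : ℕ → Fin n → ℝ) (z π ξ : ℕ → Fin m → ℝ) (y η ζ : ℕ → Fin p → ℝ)
    (φ : ℕ → ℝ) (hφpos : ∀ k, 0 < φ k)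
    (hz : ∀ k, 0 ≤ z k) (hs : ∀ k, 0 ≤ A.mulVec (x k) + z k - b)
    (hπ : ∀ k, 0 ≤ π k) (hξ : ∀ k, 0 ≤ ξ k)
    (hη : ∀ k, 0 ≤ η k) (hζ : ∀ k, 0 ≤ ζ k)
    (hφ : Tendsto φ atTop atTop)
    (K : Set ℕ) (hK : K.Infinite)
    (hbd1 : ∃ M : ℝ, ∀ k ∈ K, ‖(A.mulVec (x k) + z k - b) * π k‖ ≤ M)
    (hbd2 : ∃ M : ℝ, ∀ k ∈ K, ‖H.mulVec (x k) + c - Aᵀ.mulVec (π k)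
      - Cᵀ.mulVec (η k - ζ k)‖ ≤ M)
    (hbd3 : ∃ M : ℝ, ∀ k ∈ K, ‖π k + ξ k - fun _ => φ k‖ ≤ M)
    (hbd4 : ∃ M : ℝ, ∀ k ∈ K, ‖η k + ζ k - fun _ => φ k‖ ≤ M)
    (hbd5 : ∃ M : ℝ, ∀ k ∈ K, φ k / max 1 (max ‖π k‖ ‖η k - ζ k‖) ≤ M)
    (hz0 : Tendsto (fun k => z k) (atTop ⊓ Filter.principal K) (nhds 0))
    (hy0 : Tendsto (fun k => y k) (atTop ⊓ Filter.principal K) (nhds 0))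
    (hxbd : ∃ M : ℝ, ∀ k ∈ K, ‖x k‖ ≤ M) :
    ∀ xstar : Fin n → ℝ,
      (∃ σ : ℕ → ℕ, StrictMono σ ∧ (∀ j, σ j ∈ K) ∧
        Tendsto (fun j => x (σ j)) atTop (nhds xstar)) →
      ∃ (pibar : Fin m → ℝ) (omegabar : Fin p → ℝ),
        0 ≤ pibar ∧ (pibar, omegabar) ≠ (0, 0) ∧
        Aᵀ.mulVec pibar + Cᵀ.mulVec omegabar = 0 ∧
        ∀ i, pibar i * (A.mulVec xstar - b) i = 0 := by
  rintro xstar ⟨σ, hσ, hσK, hx⟩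
  have hσl : Tendsto σ atTop (atTop ⊓ 𝓟 K) :=
    tendsto_inf.2 ⟨hσ.tendsto_atTop, tendsto_principal.2 (.of_forall hσK)⟩
  exact limit_point_degenerate_multiplier_with_equalities_general A b C (fun v => H *ᵥ v + c)
    (.of_comp hσl hx.mapClusterPt) (by fun_prop) hz0 (.of_forall hπ)
    (isBoundedUnder_inf_principal hbd1) (isBoundedUnder_inf_principal hbd2)
    (tendsto_atTop_of_isBoundedUnder_div_max_one (hφ.mono_left inf_le_left)
      (isBoundedUnder_inf_principal hbd5))
end

section
/- Suppose C has full row rank (rank p), and suppose there exists x̂ ∈ ℝ^n with Ax̂ > b (strict inequality in every component) and Cx̂ = d. Let x* ∈ ℝ^n satisfy Ax* ≥ b and Cx* = d, and let π ∈ ℝ^m and ω ∈ ℝ^p satisfy π ≥ 0, Aᵀπ + Cᵀω = 0, and πᵢ·(Ax* − b)ᵢ = 0 for every i. Then π = 0 and ω = 0. (Core contradiction argument in the proof of Theorem 4.7.) -/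
open Matrix Filter

/-!
On the affine set `C x = d`, stationarity makes `π ⬝ᵥ A x` constant, so the complementarity
`π ⬝ᵥ (A x - b) = 0` transfers from `x = xstar` to the Slater point `x = xhat`. There every slack
is positive, which forces `π = 0`; stationarity then reads `Cᵀ ω = 0`, and the rows of `C` are
linearly independent.
-/

theorem eq_zero_of_dotProduct_eq_zero_of_pos {ι R : Type*} [Fintype ι] [Semiring R] [PartialOrder R]
    [IsStrictOrderedRing R] {u v : ι → R} (hu : 0 ≤ u) (hv : ∀ i, 0 < v i) (huv : u ⬝ᵥ v = 0) :
    u = 0 := by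
  have hterm : ∀ i, u i * v i = 0 := fun i =>
    (Finset.sum_eq_zero_iff_of_nonneg fun j _ => mul_nonneg (hu j) (hv j).le).1 huv i
      (Finset.mem_univ i)
  funext i
  by_contra hne
  exact (mul_pos ((hu i).lt_of_ne' hne) (hv i)).ne' (hterm i)

theorem linearIndependent_row_iff_rank_eq_card {m n K : Type*} [Fintype m] [Fintype n] [Field K]
    {C : Matrix m n K} : LinearIndependent K C.row ↔ C.rank = Fintype.card m := by
  rw [linearIndependent_iff_card_eq_finrank_span, Set.finrank, ← rank_eq_finrank_span_row, eq_comm]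

section Multipliers

variable {m n p R : Type*} [Fintype m] [Fintype n] [Fintype p] [CommRing R]

theorem dotProduct_mulVec_eq_of_stationary {A : Matrix m n R} {C : Matrix p n R} {π : m → R}
    {ω : p → R} (hstat : Aᵀ *ᵥ π + Cᵀ *ᵥ ω = 0) {x y : n → R} (hxy : C *ᵥ x = C *ᵥ y) :
    π ⬝ᵥ A *ᵥ x = π ⬝ᵥ A *ᵥ y := by
  have hsum (z : n → R) : π ⬝ᵥ A *ᵥ z + ω ⬝ᵥ C *ᵥ z = 0 := calc
    π ⬝ᵥ A *ᵥ z + ω ⬝ᵥ C *ᵥ z = z ⬝ᵥ (Aᵀ *ᵥ π + Cᵀ *ᵥ ω) := by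
      rw [dotProduct_add, dotProduct_transpose_mulVec, dotProduct_transpose_mulVec]
    _ = 0 := by rw [hstat, dotProduct_zero]
  refine add_right_cancel (b := ω ⬝ᵥ C *ᵥ x) ?_
  rw [hsum x, hxy, hsum y]

theorem multipliers_vanish_with_equalities_general [PartialOrder R] [IsStrictOrderedRing R]
    {A : Matrix m n R} {b : m → R} {C : Matrix p n R} {d : p → R}
    (hC : LinearIndependent R C.row)
    {xhat : n → R} (hslater : ∀ i, b i < (A *ᵥ xhat) i) (heqhat : C *ᵥ xhat = d)
    {xstar : n → R} (heqstar : C *ᵥ xstar = d)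
    {π : m → R} {ω : p → R} (hπ : 0 ≤ π) (hstat : Aᵀ *ᵥ π + Cᵀ *ᵥ ω = 0)
    (hcomp : ∀ i, π i * (A *ᵥ xstar - b) i = 0) :
    π = 0 ∧ ω = 0 := by
  have hslack : π ⬝ᵥ (A *ᵥ xhat - b) = 0 := calc
    π ⬝ᵥ (A *ᵥ xhat - b) = π ⬝ᵥ (A *ᵥ xstar - b) := by
      rw [dotProduct_sub, dotProduct_sub,
        dotProduct_mulVec_eq_of_stationary hstat (heqhat.trans heqstar.symm)]
    _ = 0 := Finset.sum_eq_zero fun i _ => hcomp i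
  have hπ_zero : π = 0 :=
    eq_zero_of_dotProduct_eq_zero_of_pos hπ (fun i => sub_pos.2 (hslater i)) hslack
  have hCω : ω ᵥ* C = 0 := by
    rwa [hπ_zero, mulVec_zero, zero_add, mulVec_transpose] at hstat
  exact ⟨hπ_zero, vecMul_injective_iff.2 hC (hCω.trans (zero_vecMul C).symm)⟩

end Multipliers

/-- core contradiction argument in the proof of Theorem 4.7:
with C of full row rank and a Slater point, the multipliers vanish. -/
theorem multipliers_vanish_with_equalities
    {n m p : ℕ} (A : Matrix (Fin m) (Fin n) ℝ) (b : Fin m → ℝ)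
    (C : Matrix (Fin p) (Fin n) ℝ) (d : Fin p → ℝ)
    (hrank : C.rank = p)
    (xhat : Fin n → ℝ) (hslater : ∀ i, b i < A.mulVec xhat i)
    (heqhat : C.mulVec xhat = d)
    (xstar : Fin n → ℝ) (hfeas : b ≤ A.mulVec xstar)
    (heqstar : C.mulVec xstar = d)
    (π : Fin m → ℝ) (ω : Fin p → ℝ) (hπ : 0 ≤ π)
    (hstat : Aᵀ.mulVec π + Cᵀ.mulVec ω = 0)
    (hcomp : ∀ i, π i * (A.mulVec xstar - b) i = 0) :
    π = 0 ∧ ω = 0 :=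
  multipliers_vanish_with_equalities_general
    (linearIndependent_row_iff_rank_eq_card.2 (hrank.trans (Fintype.card_fin p).symm))
    hslater heqhat heqstar hπ hstat hcomp
end
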